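/- arXiv:2205.11953 — 5 statements merged into one kernel-verified Lean document; each statement's English description precedes it below -/
import Mathlib

section
/- Let q ≥ 1, let ᾱ₁,…,ᾱ_q ≥ 0 satisfy ᾱ₁+⋯+ᾱ_q < 1, and let Λ̄ be the q×q companion matrix with first row (ᾱ₁,…,ᾱ_q), ones on the subdiagonal and zeros elsewhere. Then I_q − Λ̄ is invertible with (I_q−Λ̄)^{−1} = Σ_{i=0}^∞ Λ̄^i, a matrix with nonnegative entries, and the map ‖x‖_• := 1_q'(I_q−Λ̄)^{−1}(x)^{abs} is a monotone vector norm on ℝ^q satisfying, for every x ∈ ℝ^q, ‖x‖_• = ‖x‖₁ + 1_q'(I_q−Λ̄)^{−1}Λ̄(x)^{abs}; in particular ‖x‖_• ≥ ‖x‖₁. -/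
/-- A vector norm on ℝ^q is monotone if |x_i| ≤ |y_i| for all i implies ‖x‖ ≤ ‖y‖. -/
def IsMonotoneNorm {d : ℕ} (N : (Fin d → ℝ) → ℝ) : Prop :=
  ∀ x y : Fin d → ℝ, (∀ i, |x i| ≤ |y i|) → N x ≤ N y

/-- A vector norm on ℝ^d, given as a function satisfying the norm axioms. -/
def IsVectorNorm {d : ℕ} (N : (Fin d → ℝ) → ℝ) : Prop :=
  (∀ x, 0 ≤ N x) ∧ (∀ x, N x = 0 ↔ x = 0) ∧
  (∀ (c : ℝ) (x : Fin d → ℝ), N (c • x) = |c| * N x) ∧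
  (∀ x y : Fin d → ℝ, N (x + y) ≤ N x + N y)

/-- The q×q companion matrix with first row (ᾱ₁,…,ᾱ_q), ones on the subdiagonal. -/
def companionMat (q : ℕ) (a : ℕ → ℝ) : Matrix (Fin q) (Fin q) ℝ :=
  Matrix.of fun i j =>
    if (i : ℕ) = 0 then a ((j : ℕ) + 1)
    else if (i : ℕ) = (j : ℕ) + 1 then 1 else 0

/-!
Let `A` be the companion matrix and `v i = C + i`. Below the first row `A` shifts `v` down, so there
`A v = v - 1`; in the first row `(A v) 0 = C ∑ aⱼ + const`, which is less than `C` for large `C`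
because `∑ aⱼ < 1`. Hence `A v < v` entrywise. Since `A` is nonnegative, the partial sums of
`∑ Aᵏ (v - A v)` telescope to `v - Aⁿ v ≤ v`, so the Neumann series of `A` converges. Its sum
`(1 - A)⁻¹` dominates `A⁰ = 1` entrywise, so its column sums are at least `1`, and `‖·‖_•` is the
weighted `l₁` norm having these column sums as weights.
-/

open Matrix

theorem mul_le_mulVec_apply {m n R : Type*} [Fintype n] [Semiring R] [PartialOrder R]
    [IsOrderedRing R] {A : Matrix m n R} {v : n → R} (hA : ∀ i j, 0 ≤ A i j) (hv : ∀ j, 0 ≤ v j)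
    (i : m) (j : n) : A i j * v j ≤ (A *ᵥ v) i :=
  Finset.single_le_sum (f := fun k => A i k * v k)
    (fun k _ => mul_nonneg (hA i k) (hv k)) (Finset.mem_univ j)

section NeumannSeries

theorem isUnit_one_sub_of_summable_pow {R : Type*} [Ring R] [TopologicalSpace R]
    [IsTopologicalRing R] [T2Space R] {x : R} (h : Summable (x ^ ·)) : IsUnit (1 - x) :=
  ⟨⟨1 - x, _, h.one_sub_mul_tsum_pow, h.tsum_pow_mul_one_sub⟩, rfl⟩

theorem hasSum_pow_inv_one_sub {n R : Type*} [Fintype n] [DecidableEq n] [CommRing R]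
    [TopologicalSpace R] [IsTopologicalRing R] [T2Space R] {A : Matrix n n R}
    (h : Summable (A ^ ·)) : HasSum (A ^ ·) (1 - A)⁻¹ :=
  inv_eq_left_inv h.tsum_pow_mul_one_sub ▸ h.hasSum

theorem sum_inv_one_sub_mulVec {n R : Type*} [Fintype n] [DecidableEq n] [CommRing R]
    {A : Matrix n n R} (h : IsUnit (1 - A)) (y : n → R) :
    ∑ i, ((1 - A)⁻¹ *ᵥ y) i = ∑ i, y i + ∑ i, (((1 - A)⁻¹ * A) *ᵥ y) i := by
  have inv_eq : (1 - A)⁻¹ = 1 + (1 - A)⁻¹ * A := by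
    have inv_mul := nonsing_inv_mul (1 - A) ((isUnit_iff_isUnit_det _).mp h)
    rwa [mul_sub, mul_one, sub_eq_iff_eq_add] at inv_mul
  conv_lhs => rw [inv_eq, add_mulVec, one_mulVec]
  exact Finset.sum_add_distrib

variable {n : Type*} [Fintype n] [DecidableEq n] {A : Matrix n n ℝ}

theorem sum_range_pow_mulVec_sub_le {v : n → ℝ} (hA : ∀ i j, 0 ≤ A i j) (hv : ∀ i, 0 ≤ v i)
    (N : ℕ) (i : n) : ∑ k ∈ Finset.range N, (A ^ k *ᵥ (v - A *ᵥ v)) i ≤ v i := by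
  have telescope : ∑ k ∈ Finset.range N, A ^ k *ᵥ (v - A *ᵥ v) = v - A ^ N *ᵥ v := by
    calc ∑ k ∈ Finset.range N, A ^ k *ᵥ (v - A *ᵥ v)
        = ((∑ k ∈ Finset.range N, A ^ k) * (1 - A)) *ᵥ v := by
          rw [← sum_mulVec, ← mulVec_mulVec, sub_mulVec, one_mulVec]
      _ = v - A ^ N *ᵥ v := by rw [geom_sum_mul_neg, sub_mulVec, one_mulVec]
  rw [← Finset.sum_apply, telescope, Pi.sub_apply]
  exact sub_le_self _ (dotProduct_nonneg_of_nonneg (pow_apply_nonneg hA N i) hv)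

theorem summable_pow_of_mulVec_lt {v : n → ℝ} (hA : ∀ i j, 0 ≤ A i j) (hv : ∀ i, 0 ≤ v i)
    (hAv : ∀ i, (A *ᵥ v) i < v i) : Summable (A ^ ·) := by
  have gap_pos (j : n) : 0 < (v - A *ᵥ v) j := sub_pos.mpr (hAv j)
  refine Pi.summable.mpr fun i => Pi.summable.mpr fun j => ?_
  rw [← summable_mul_right_iff (gap_pos j).ne']
  refine summable_of_sum_range_le (c := v i)
    (fun k => mul_nonneg (pow_apply_nonneg hA k i j) (gap_pos j).le) fun N => ?_
  calc ∑ k ∈ Finset.range N, (A ^ k) i j * (v - A *ᵥ v) j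
      ≤ ∑ k ∈ Finset.range N, (A ^ k *ᵥ (v - A *ᵥ v)) i := Finset.sum_le_sum fun k _ =>
        mul_le_mulVec_apply (pow_apply_nonneg hA k) (fun l => (gap_pos l).le) i j
    _ ≤ v i := sum_range_pow_mulVec_sub_le hA hv N i

theorem one_apply_le_inv_one_sub_apply (hA : ∀ i j, 0 ≤ A i j) (h : Summable (A ^ ·)) (i j : n) :
    (1 : Matrix n n ℝ) i j ≤ (1 - A)⁻¹ i j := by
  have hasSum_inv := hasSum_pow_inv_one_sub h
  have hasSum_entry : HasSum (fun k => (A ^ k) i j) ((1 - A)⁻¹ i j) :=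
    Pi.hasSum.mp (Pi.hasSum.mp hasSum_inv i) j
  simpa only [pow_zero] using le_hasSum hasSum_entry 0 fun k _ => pow_apply_nonneg hA k i j

theorem inv_one_sub_apply_nonneg (hA : ∀ i j, 0 ≤ A i j) (h : Summable (A ^ ·)) (i j : n) :
    0 ≤ (1 - A)⁻¹ i j :=
  (zero_le_one_elem i j).trans (one_apply_le_inv_one_sub_apply hA h i j)

theorem one_le_sum_inv_one_sub_apply (hA : ∀ i j, 0 ≤ A i j) (h : Summable (A ^ ·)) (j : n) :
    1 ≤ ∑ i, (1 - A)⁻¹ i j := by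
  calc (1 : ℝ) = ∑ i, (1 : Matrix n n ℝ) i j := by simp [one_apply]
    _ ≤ ∑ i, (1 - A)⁻¹ i j :=
      Finset.sum_le_sum fun i _ => one_apply_le_inv_one_sub_apply hA h i j

end NeumannSeries

theorem isVectorNorm_sum_mul_abs {d : ℕ} {w : Fin d → ℝ} (hw : ∀ j, 0 < w j) :
    IsVectorNorm fun x : Fin d → ℝ => ∑ j, w j * |x j| := by
  have term_nonneg (x : Fin d → ℝ) (j : Fin d) : 0 ≤ w j * |x j| :=
    mul_nonneg (hw j).le (abs_nonneg _)
  refine ⟨fun x => Finset.sum_nonneg fun j _ => term_nonneg x j, fun x => ?_, fun c x => ?_,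
    fun x y => ?_⟩
  · rw [Finset.sum_eq_zero_iff_of_nonneg fun j _ => term_nonneg x j]
    simp [funext_iff, (hw _).ne']
  · simp only [Pi.smul_apply, smul_eq_mul, abs_mul, Finset.mul_sum, mul_left_comm]
  · simp only [← Finset.sum_add_distrib, ← mul_add]
    exact Finset.sum_le_sum fun j _ => mul_le_mul_of_nonneg_left (abs_add_le _ _) (hw j).le

theorem isMonotoneNorm_sum_mul_abs {d : ℕ} {w : Fin d → ℝ} (hw : ∀ j, 0 ≤ w j) :
    IsMonotoneNorm fun x : Fin d → ℝ => ∑ j, w j * |x j| :=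
  fun _ _ hxy => Finset.sum_le_sum fun j _ => mul_le_mul_of_nonneg_left (hxy j) (hw j)

theorem sum_mulVec_eq_sum_colSum_mul {m n R : Type*} [Fintype m] [Fintype n]
    [NonUnitalNonAssocSemiring R] (B : Matrix m n R) (y : n → R) :
    ∑ i, (B *ᵥ y) i = ∑ j, (∑ i, B i j) * y j := by
  simp only [mulVec, dotProduct, Finset.sum_mul]
  exact Finset.sum_comm

theorem sum_le_sum_mulVec {m n R : Type*} [Fintype m] [Fintype n] [Semiring R] [PartialOrder R]
    [IsOrderedRing R] {B : Matrix m n R} {y : n → R} (hB : ∀ j, 1 ≤ ∑ i, B i j)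
    (hy : ∀ j, 0 ≤ y j) : ∑ j, y j ≤ ∑ i, (B *ᵥ y) i := by
  rw [sum_mulVec_eq_sum_colSum_mul]
  exact Finset.sum_le_sum fun j _ => le_mul_of_one_le_left (hy j) (hB j)

theorem companionMat_apply_nonneg {q : ℕ} {a : ℕ → ℝ} (ha : ∀ i, 1 ≤ i → i ≤ q → 0 ≤ a i)
    (i j : Fin q) : 0 ≤ companionMat q a i j := by
  simp only [companionMat, of_apply]
  split_ifs
  exacts [ha _ (by omega) (by omega), zero_le_one, le_rfl]

theorem companionMat_mulVec_zero {p : ℕ} (a : ℕ → ℝ) (v : Fin (p + 1) → ℝ) :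
    (companionMat (p + 1) a *ᵥ v) 0 = ∑ j : Fin (p + 1), a (j + 1) * v j := by
  simp [companionMat, mulVec, dotProduct]

theorem companionMat_mulVec_succ {p : ℕ} (a : ℕ → ℝ) (v : Fin (p + 1) → ℝ) (i : Fin p) :
    (companionMat (p + 1) a *ᵥ v) i.succ = v i.castSucc := by
  have row_eq (j : Fin (p + 1)) :
      companionMat (p + 1) a i.succ j = if i.castSucc = j then 1 else 0 := by
    simp only [companionMat, of_apply, Fin.val_succ, Nat.add_one_ne_zero, if_false,
      Nat.add_right_cancel_iff, Fin.ext_iff, Fin.val_castSucc]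
  simp [mulVec, dotProduct, row_eq]

theorem exists_companionMat_mulVec_lt {p : ℕ} {a : ℕ → ℝ}
    (ha : ∀ i, 1 ≤ i → i ≤ p + 1 → 0 ≤ a i) (hsum : ∑ i ∈ Finset.Icc 1 (p + 1), a i < 1) :
    ∃ v : Fin (p + 1) → ℝ, (∀ i, 0 ≤ v i) ∧ ∀ i, (companionMat (p + 1) a *ᵥ v) i < v i := by
  have sum_lt_one : ∑ j : Fin (p + 1), a (j + 1) < 1 := by
    rwa [Fin.sum_univ_eq_sum_range (fun j => a (j + 1)), Finset.range_eq_Ico,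
      Finset.sum_Ico_add' a 0 (p + 1) 1]
  have moment_nonneg : 0 ≤ ∑ j : Fin (p + 1), a (j + 1) * (j : ℝ) :=
    Finset.sum_nonneg fun j _ => mul_nonneg (ha _ (by omega) (by omega)) (Nat.cast_nonneg _)
  set s := ∑ j : Fin (p + 1), a (j + 1)
  set t := ∑ j : Fin (p + 1), a (j + 1) * (j : ℝ)
  obtain ⟨C, hC_nonneg, hC⟩ : ∃ C : ℝ, 0 ≤ C ∧ s * C + t < C := by
    have gap_pos : 0 < 1 - s := sub_pos.mpr sum_lt_one
    have : (1 - s) * ((t + 1) / (1 - s)) = t + 1 := mul_div_cancel₀ _ gap_pos.ne'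
    exact ⟨(t + 1) / (1 - s), by positivity, by linarith⟩
  refine ⟨fun i => C + (i : ℕ), fun i => by positivity, fun i => ?_⟩
  cases i using Fin.cases with
  | zero =>
    rw [companionMat_mulVec_zero]
    simpa only [mul_add, Finset.sum_add_distrib, ← Finset.sum_mul, Fin.val_zero, Nat.cast_zero,
      add_zero] using hC
  | succ i =>
    rw [companionMat_mulVec_succ]
    simp

/-- for ᾱ_i ≥ 0 with Σᾱ_i < 1 and Λ̄ the companion matrix, I−Λ̄ is
invertible with (I−Λ̄)^{−1} = Σ Λ̄^i entrywise nonnegative, and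
‖x‖_• = 1'(I−Λ̄)^{−1}(x)^{abs} is a monotone vector norm with
‖x‖_• = ‖x‖₁ + 1'(I−Λ̄)^{−1}Λ̄(x)^{abs} ≥ ‖x‖₁. -/
theorem stmt_6 (q : ℕ) (hq : 1 ≤ q) (a : ℕ → ℝ)
    (ha : ∀ i, 1 ≤ i → i ≤ q → 0 ≤ a i)
    (hsum : (∑ i ∈ Finset.Icc 1 q, a i) < 1) :
    IsUnit (1 - companionMat q a) ∧
    HasSum (fun i : ℕ => (companionMat q a) ^ i) (1 - companionMat q a)⁻¹ ∧
    (∀ i j, 0 ≤ (1 - companionMat q a)⁻¹ i j) ∧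
    (IsVectorNorm (fun x : Fin q → ℝ =>
        ∑ i, ((1 - companionMat q a)⁻¹.mulVec fun j => |x j|) i) ∧
      IsMonotoneNorm (fun x : Fin q → ℝ =>
        ∑ i, ((1 - companionMat q a)⁻¹.mulVec fun j => |x j|) i)) ∧
    (∀ x : Fin q → ℝ,
      (∑ i, ((1 - companionMat q a)⁻¹.mulVec fun j => |x j|) i)
        = (∑ i, |x i|) +
          ∑ i, (((1 - companionMat q a)⁻¹ * companionMat q a).mulVec fun j => |x j|) i) ∧
    (∀ x : Fin q → ℝ,
      (∑ i, |x i|) ≤ ∑ i, ((1 - companionMat q a)⁻¹.mulVec fun j => |x j|) i) := by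
  obtain ⟨p, rfl⟩ := Nat.exists_eq_add_of_le' hq
  have hA := companionMat_apply_nonneg ha
  obtain ⟨v, hv, hAv⟩ := exists_companionMat_mulVec_lt ha hsum
  have hpow := summable_pow_of_mulVec_lt hA hv hAv
  have hunit := isUnit_one_sub_of_summable_pow hpow
  have one_le_colSum := one_le_sum_inv_one_sub_apply hA hpow
  have colSum_pos := fun j => one_pos.trans_le (one_le_colSum j)
  refine ⟨hunit, hasSum_pow_inv_one_sub hpow, inv_one_sub_apply_nonneg hA hpow, ⟨?_, ?_⟩,
    fun x => sum_inv_one_sub_mulVec hunit _,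
    fun x => sum_le_sum_mulVec one_le_colSum fun j => abs_nonneg (x j)⟩
  · simpa only [sum_mulVec_eq_sum_colSum_mul] using isVectorNorm_sum_mul_abs colSum_pos
  · simpa only [sum_mulVec_eq_sum_colSum_mul] using
      isMonotoneNorm_sum_mul_abs fun j => (colSum_pos j).le
end

section
/- Let a ≥ 2 and let ε be a real random variable with E[ε] = 0, E[ε²] = 1 and μ_a := E[|ε|^a] < ∞. Then there exist positive constants A and B, depending only on a, such that for every m ∈ ℝ with m ≠ 0 and every σ ≥ 0, E[|m + σε|^a] ≤ |m|^a + A|m|^{a−2}σ² + Bσ^a μ_a. -/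
open MeasureTheory

/-!
After dividing by `|m| ^ a`, everything rests on the pointwise inequality
`|1 + u| ^ a ≤ 1 + a u + a² u² + (a + 1) ^ a |u| ^ a`. If `|1 + u| ≤ (a + 1) |u|`, the last term
alone dominates the left side, and `1 + a u + (a u)² ≥ 0`. Otherwise `1 + u > 0` and `a |u| ≤ 1`, so
`(1 + u) ^ a ≤ exp (a u) ≤ 1 + a u + (a u)²`. Taking expectations removes the linear term because
the variable is centred.
-/

theorem one_add_rpow_le_exp_mul {a u : ℝ} (ha : 0 ≤ a) (hu : -1 ≤ u) :
    (1 + u) ^ a ≤ Real.exp (a * u) :=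
  calc (1 + u) ^ a ≤ Real.exp u ^ a :=
        Real.rpow_le_rpow (by linarith) (by linarith [Real.add_one_le_exp u]) ha
    _ = Real.exp (a * u) := by rw [← Real.exp_mul, mul_comm]

theorem one_add_rpow_le_quadratic {a u : ℝ} (ha : 0 ≤ a) (hu : -1 ≤ u) (hau : |a * u| ≤ 1) :
    (1 + u) ^ a ≤ 1 + a * u + (a * u) ^ 2 := by
  have exp_le := (le_abs_self _).trans (Real.abs_exp_sub_one_sub_id_le hau)
  linarith [one_add_rpow_le_exp_mul ha hu]

theorem abs_one_add_rpow_le {a : ℝ} (ha : 0 ≤ a) (u : ℝ) :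
    |1 + u| ^ a ≤ 1 + a * u + (a * u) ^ 2 + (a + 1) ^ a * |u| ^ a := by
  rcases le_or_gt |1 + u| ((a + 1) * |u|) with h_large | h_small
  · have quadratic_nonneg : 0 ≤ 1 + a * u + (a * u) ^ 2 := by
      nlinarith [sq_nonneg (a * u + 1), sq_nonneg (a * u)]
    have le_last : |1 + u| ^ a ≤ (a + 1) ^ a * |u| ^ a := by
      rw [← Real.mul_rpow (by positivity) (abs_nonneg u)]
      exact Real.rpow_le_rpow (abs_nonneg _) h_large ha
    linarith
  · have hau : |a * u| ≤ 1 := by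
      rw [abs_mul, abs_of_nonneg ha]
      linarith [abs_add_le 1 u, abs_one (α := ℝ)]
    have abs_lt_abs_one_add : |u| < |1 + u| := by nlinarith [mul_nonneg ha (abs_nonneg u)]
    have hu : 0 < 1 + u := by nlinarith [sq_lt_sq.mpr abs_lt_abs_one_add]
    have last_nonneg : 0 ≤ (a + 1) ^ a * |u| ^ a := by positivity
    rw [abs_of_pos hu]
    linarith [one_add_rpow_le_quadratic ha (by linarith) hau]

theorem abs_add_rpow_le {a m : ℝ} (ha : 0 ≤ a) (hm : m ≠ 0) (y : ℝ) :
    |m + y| ^ a ≤ |m| ^ a + |m| ^ a * a / m * y + a ^ 2 * |m| ^ (a - 2) * y ^ 2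
      + (a + 1) ^ a * |y| ^ a := by
  have hm_pos : 0 < |m| := abs_pos.mpr hm
  have rpow_sub_two : |m| ^ (a - 2) = |m| ^ a / m ^ 2 := by
    rw [Real.rpow_sub hm_pos, Real.rpow_two, sq_abs]
  have rpow_mul_div : |m| ^ a * |y / m| ^ a = |y| ^ a := by
    rw [← Real.mul_rpow (abs_nonneg _) (abs_nonneg _), ← abs_mul, mul_div_cancel₀ y hm]
  calc |m + y| ^ a = |m| ^ a * |1 + y / m| ^ a := by
        rw [← Real.mul_rpow (abs_nonneg _) (abs_nonneg _), ← abs_mul, mul_add, mul_one,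
          mul_div_cancel₀ y hm]
    _ ≤ |m| ^ a * (1 + a * (y / m) + (a * (y / m)) ^ 2 + (a + 1) ^ a * |y / m| ^ a) := by
        gcongr
        exact abs_one_add_rpow_le ha _
    _ = |m| ^ a + |m| ^ a * a / m * y + a ^ 2 * (|m| ^ a / m ^ 2) * y ^ 2
          + (a + 1) ^ a * (|m| ^ a * |y / m| ^ a) := by ring
    _ = _ := by rw [rpow_sub_two, rpow_mul_div]

theorem integral_abs_add_rpow_le {Ω : Type*} [MeasurableSpace Ω] {P : Measure Ω}
    [IsProbabilityMeasure P] {Y : Ω → ℝ} {a m : ℝ} (ha : 0 ≤ a) (hm : m ≠ 0)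
    (hY : MemLp Y 2 P) (hY_mean : ∫ ω, Y ω ∂P = 0) (hYa : Integrable (fun ω => |Y ω| ^ a) P) :
    ∫ ω, |m + Y ω| ^ a ∂P ≤ |m| ^ a + a ^ 2 * |m| ^ (a - 2) * ∫ ω, Y ω ^ 2 ∂P
      + (a + 1) ^ a * ∫ ω, |Y ω| ^ a ∂P := by
  have int_const : Integrable (fun _ : Ω => |m| ^ a) P := integrable_const _
  have int_linear := (hY.integrable one_le_two).const_mul (|m| ^ a * a / m)
  have int_square := hY.integrable_sq.const_mul (a ^ 2 * |m| ^ (a - 2))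
  have int_rpow := hYa.const_mul ((a + 1) ^ a)
  have int_affine := int_const.fun_add int_linear
  have int_quadratic := int_affine.fun_add int_square
  calc ∫ ω, |m + Y ω| ^ a ∂P
      ≤ ∫ ω, (|m| ^ a + |m| ^ a * a / m * Y ω + a ^ 2 * |m| ^ (a - 2) * Y ω ^ 2
          + (a + 1) ^ a * |Y ω| ^ a) ∂P :=
        integral_mono_of_nonneg (.of_forall fun _ => by positivity)
          (int_quadratic.fun_add int_rpow)
          (.of_forall fun ω => abs_add_rpow_le ha hm (Y ω))
    _ = _ := by
        rw [integral_add int_quadratic int_rpow, integral_add int_affine int_square,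
          integral_add int_const int_linear]
        simp only [integral_const_mul, hY_mean, integral_const, probReal_univ, one_smul, mul_zero,
          add_zero]

theorem stmt_8_general {a : ℝ} (ha : 0 < a) :
    ∃ A B : ℝ, 0 < A ∧ 0 < B ∧
      ∀ {Ω : Type*} [MeasurableSpace Ω] {P : Measure Ω} [IsProbabilityMeasure P] {X : Ω → ℝ},
        MemLp X 2 P → ∫ ω, X ω ∂P = 0 → Integrable (fun ω => |X ω| ^ a) P →
        ∀ m σ : ℝ, m ≠ 0 → 0 ≤ σ →
          ∫ ω, |m + σ * X ω| ^ a ∂P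
            ≤ |m| ^ a + A * |m| ^ (a - 2) * σ ^ 2 * ∫ ω, X ω ^ 2 ∂P
              + B * σ ^ a * ∫ ω, |X ω| ^ a ∂P := by
  refine ⟨a ^ 2, (a + 1) ^ a, by positivity, by positivity, ?_⟩
  intro Ω _ P _ X hX hX_mean hXa m σ hm hσ
  have abs_mul_rpow (ω : Ω) : |σ * X ω| ^ a = σ ^ a * |X ω| ^ a := by
    rw [abs_mul, abs_of_nonneg hσ, Real.mul_rpow hσ (abs_nonneg _)]
  have bound := integral_abs_add_rpow_le ha.le hm (hX.const_mul σ)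
    (by rw [integral_const_mul, hX_mean, mul_zero])
    (by simpa only [abs_mul_rpow] using hXa.const_mul (σ ^ a))
  simpa only [abs_mul_rpow, mul_pow, integral_const_mul, ← mul_assoc] using bound

/-- for a ≥ 2 there are positive constants A and B, depending only on a,
such that for every real random variable ε (with law με) with mean 0, variance 1 and
μ_a = E[|ε|^a] < ∞, and for every m ≠ 0 and σ ≥ 0,
E[|m + σε|^a] ≤ |m|^a + A|m|^{a−2}σ² + Bσ^a μ_a. -/
theorem stmt_8 (a : ℝ) (ha : 2 ≤ a) :
    ∃ A B : ℝ, 0 < A ∧ 0 < B ∧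
      ∀ (με : Measure ℝ), IsProbabilityMeasure με →
        (∫ x, x ∂με) = 0 → (∫ x, x ^ 2 ∂με) = 1 →
        Integrable (fun x => |x| ^ a) με →
        ∀ (m σ : ℝ), m ≠ 0 → 0 ≤ σ →
          (∫ x, |m + σ * x| ^ a ∂με)
            ≤ |m| ^ a + A * |m| ^ (a - 2) * σ ^ 2
              + B * σ ^ a * ∫ x, |x| ^ a ∂με := by
  obtain ⟨A, B, hA, hB, bound⟩ := stmt_8_general (a := a) (by linarith)
  refine ⟨A, B, hA, hB, fun με _ mean_zero variance_one hεa m σ hm hσ => ?_⟩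
  have int_sq : Integrable (fun x : ℝ => x ^ 2) με :=
    .of_integral_ne_zero (by rw [variance_one]; exact one_ne_zero)
  simpa only [id, variance_one, mul_one] using
    bound ((memLp_two_iff_integrable_sq aestronglyMeasurable_id).mpr int_sq) mean_zero hεa m σ hm hσ
end

section
/- Let s₀ ≥ 1, ρ ∈ (0,2), α = 1 − ρ/(2s₀), and let b ≥ 1 satisfy b = 1 when s₀ = 1 and b > (2s₀−ρ)/(s₀(2−ρ)) when s₀ > 1. Let ε be a real random variable with E[ε] = 0, E[ε²] = 1 and E[|ε|^{2s₀}] < ∞. Let g : ℝ → ℝ be measurable and satisfy: there exist constants r, M₀, K₀ > 0 such that |g(u)| ≤ (1−r|u|^{−ρ})|u| for |u| ≥ M₀ and |g(u)| ≤ K₀ for |u| ≤ M₀. Fix C₀ > 0. Then there exist constants r̃ > 0 and C < ∞ such that for all z ∈ ℝ, all w ≥ 0 and all σ ≥ 0 with σ² ≤ C₀(1+w), E[|g(z) + σε|^{2s₀}] ≤ |z|^{2s₀} − r̃|z|^{2s₀α} + C w^{b s₀} + C. -/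
open MeasureTheory

/-!
Write `p = 2 s₀`. The function `‖·‖ ^ p` has gradient `p ‖x‖ ^ (p - 2) x`, which is Lipschitz on the
ball of radius `R` with constant of order `R ^ (p - 2)`; hence expanding around `a = g z` leaves a
remainder of order `‖a‖ ^ (p - 2) ‖h‖ ^ 2 + ‖h‖ ^ p`. The mean-zero noise `h = σ ε` kills the linear
term, so
`E ‖g z + σ ε‖ ^ p ≤ ‖g z‖ ^ p + K (‖g z‖ ^ (p - 2) σ ^ 2 + |σ| ^ p)`.
For large `z` the contraction gains `r ‖z‖ ^ (p - ρ)`, and a Young-type inequality absorbs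
`‖z‖ ^ (p - 2) σ ^ 2` into half of that gain at the cost of a multiple of
`(σ ^ 2) ^ ((p - ρ) / (2 - ρ))`. This power is where the lower bound on `b` comes from.
-/

section RealPowers

variable {p q s t x y : ℝ}

lemma rpow_eq_rpow_sub_one_mul (hx : 0 ≤ x) (hp : p ≠ 0) : x ^ p = x ^ (p - 1) * x := by
  rw [← Real.rpow_add_one' hx (by simpa), sub_add_cancel]

lemma rpow_le_one_add_rpow (hx : 0 ≤ x) (hs : 0 ≤ s) (hst : s ≤ t) : x ^ s ≤ 1 + x ^ t := by
  rcases le_total x 1 with hx1 | hx1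
  · linarith [Real.rpow_le_one hx hx1 hs, Real.rpow_nonneg hx t]
  · linarith [Real.rpow_le_rpow_of_exponent_le hx1 hst]

lemma add_rpow_le_two_rpow_mul (hx : 0 ≤ x) (hy : 0 ≤ y) (hq : 0 ≤ q) :
    (x + y) ^ q ≤ 2 ^ q * (x ^ q + y ^ q) := by
  wlog hxy : y ≤ x generalizing x y
  · simpa only [add_comm] using this hy hx (le_of_not_ge hxy)
  calc (x + y) ^ q ≤ (2 * x) ^ q := by gcongr; linarith
    _ = 2 ^ q * x ^ q := Real.mul_rpow zero_le_two hx
    _ ≤ 2 ^ q * (x ^ q + y ^ q) := by gcongr; linarith [Real.rpow_nonneg hy q]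

lemma mul_rpow_sub_one_mul_sub_le (hp : 1 ≤ p) (hx : 0 ≤ x) (hy : 0 ≤ y) :
    p * x ^ (p - 1) * (y - x) ≤ y ^ p - x ^ p := by
  rcases hx.eq_or_lt with rfl | hx
  · rcases hp.eq_or_lt with rfl | hp
    · simp
    · simpa [Real.zero_rpow, (sub_pos.2 hp).ne', (zero_lt_one.trans hp).ne'] using
        Real.rpow_nonneg hy p
  have bernoulli : 1 + p * (y / x - 1) ≤ (y / x) ^ p := by
    simpa using one_add_mul_self_le_rpow_one_add (s := y / x - 1)
      (by linarith [div_nonneg hy hx.le]) hp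
  rw [Real.div_rpow hy hx.le, le_div_iff₀ (by positivity)] at bernoulli
  calc p * x ^ (p - 1) * (y - x) = (1 + p * (y / x - 1)) * x ^ p - x ^ p := by
        rw [rpow_eq_rpow_sub_one_mul hx.le (p := p) (by linarith)]
        field_simp
        ring
    _ ≤ y ^ p - x ^ p := by linarith

lemma rpow_le_rpow_sub_of_le_one_sub_mul {r ρ : ℝ} (hp : 1 ≤ p) (hr : 0 ≤ r) (hy : 0 ≤ y)
    (ht : 0 < t) (hyt : y ≤ (1 - r * t ^ (-ρ)) * t) : y ^ p ≤ t ^ p - r * t ^ (p - ρ) := by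
  have y_le_t : y ≤ t := by nlinarith [mul_nonneg hr (Real.rpow_nonneg ht.le (-ρ))]
  calc y ^ p = y ^ (p - 1) * y := rpow_eq_rpow_sub_one_mul hy (by linarith)
    _ ≤ t ^ (p - 1) * ((1 - r * t ^ (-ρ)) * t) := by gcongr
    _ = t ^ p - r * (t ^ p * t ^ (-ρ)) := by
        rw [rpow_eq_rpow_sub_one_mul ht.le (p := p) (by linarith)]
        ring
    _ = t ^ p - r * t ^ (p - ρ) := by rw [← Real.rpow_add ht, ← sub_eq_add_neg]

lemma rpow_mul_le_mul_rpow_add_rpow {v α β δ : ℝ} (ht : 0 ≤ t) (hv : 0 ≤ v) (hδ : 0 < δ)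
    (hα : 0 ≤ α) (hβ : 0 < β) :
    t ^ α * v ≤ δ * t ^ (α + β) + δ⁻¹ ^ (α / β) * v ^ ((α + β) / β) := by
  have t_split : t ^ (α + β) = t ^ α * t ^ β := Real.rpow_add_of_nonneg ht hα hβ.le
  rcases le_total v (δ * t ^ β) with hsmall | hlarge
  · calc t ^ α * v ≤ t ^ α * (δ * t ^ β) := by gcongr
      _ = δ * t ^ (α + β) := by rw [t_split]; ring
      _ ≤ _ := le_add_of_nonneg_right (by positivity)
  · have t_le : t ^ β ≤ δ⁻¹ * v := by rwa [inv_mul_eq_div, le_div_iff₀' hδ]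
    calc t ^ α * v = (t ^ β) ^ (α / β) * v := by
          rw [← Real.rpow_mul ht, mul_div_cancel₀ _ hβ.ne']
      _ ≤ (δ⁻¹ * v) ^ (α / β) * v := by gcongr
      _ = δ⁻¹ ^ (α / β) * v ^ ((α + β) / β) := by
          rw [add_div, div_self hβ.ne', Real.rpow_add_one' hv (by positivity),
            Real.mul_rpow (by positivity) hv, mul_assoc]
      _ ≤ _ := le_add_of_nonneg_left (by positivity)

end RealPowers

section NormPowers

variable {E : Type*} [NormedAddCommGroup E]

lemma norm_rpow_smul_sub_rpow_smul_le [NormedSpace ℝ E] {q R : ℝ} {x y : E} (hq : 0 ≤ q)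
    (hx : ‖x‖ ≤ R) (hy : ‖y‖ ≤ R) :
    ‖‖x‖ ^ q • x - ‖y‖ ^ q • y‖ ≤ (q + 2) * R ^ q * ‖x - y‖ := by
  wlog hyx : ‖y‖ ≤ ‖x‖ generalizing x y
  · simpa only [norm_sub_rev] using this hy hx (le_of_not_ge hyx)
  have rpow_mono : ‖y‖ ^ q ≤ ‖x‖ ^ q := by gcongr
  have scalar_bound : (‖x‖ ^ q - ‖y‖ ^ q) * ‖y‖ ≤ (q + 1) * ‖x‖ ^ q * ‖x - y‖ := by
    have tangent := mul_rpow_sub_one_mul_sub_le (p := q + 1) (by linarith) (norm_nonneg x)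
      (norm_nonneg y)
    rw [add_sub_cancel_right, Real.rpow_add_one' (norm_nonneg _) (by positivity),
      Real.rpow_add_one' (norm_nonneg _) (by positivity)] at tangent
    calc (‖x‖ ^ q - ‖y‖ ^ q) * ‖y‖ ≤ ‖x‖ ^ q * ‖x‖ - ‖y‖ ^ q * ‖y‖ := by
          nlinarith [Real.rpow_nonneg (norm_nonneg x) q]
      _ ≤ (q + 1) * ‖x‖ ^ q * (‖x‖ - ‖y‖) := by linarith
      _ ≤ (q + 1) * ‖x‖ ^ q * ‖x - y‖ := by gcongr; exact norm_sub_norm_le x y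
  calc ‖‖x‖ ^ q • x - ‖y‖ ^ q • y‖ = ‖‖x‖ ^ q • (x - y) + (‖x‖ ^ q - ‖y‖ ^ q) • y‖ := by
        congr 1; module
    _ ≤ ‖x‖ ^ q * ‖x - y‖ + (‖x‖ ^ q - ‖y‖ ^ q) * ‖y‖ := by
        refine (norm_add_le _ _).trans_eq ?_
        rw [norm_smul, norm_smul, Real.norm_of_nonneg (by positivity),
          Real.norm_of_nonneg (sub_nonneg.2 rpow_mono)]
    _ ≤ (q + 2) * ‖x‖ ^ q * ‖x - y‖ := by linarith
    _ ≤ (q + 2) * R ^ q * ‖x - y‖ := by gcongr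

variable [InnerProductSpace ℝ E] {p : ℝ}

lemma norm_rpow_le_norm_rpow_add_inner (hp : 1 ≤ p) (x a : E) :
    ‖x‖ ^ p ≤ ‖a‖ ^ p + p * inner ℝ (‖x‖ ^ (p - 2) • x) (x - a) := by
  rcases eq_or_ne x 0 with rfl | hx
  · simpa [Real.zero_rpow (by linarith : p ≠ 0)] using Real.rpow_nonneg (norm_nonneg a) p
  have norm_x_pos : 0 < ‖x‖ := norm_pos_iff.2 hx
  have inner_ge : ‖x‖ ^ (p - 1) * (‖x‖ - ‖a‖) ≤ inner ℝ (‖x‖ ^ (p - 2) • x) (x - a) := by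
    have rpow_split : ‖x‖ ^ (p - 1) = ‖x‖ ^ (p - 2) * ‖x‖ := by
      rw [← Real.rpow_add_one norm_x_pos.ne']; congr 1; ring
    calc ‖x‖ ^ (p - 1) * (‖x‖ - ‖a‖) = ‖x‖ ^ (p - 2) * (‖x‖ ^ 2 - ‖x‖ * ‖a‖) := by
          rw [rpow_split]; ring
      _ ≤ ‖x‖ ^ (p - 2) * (‖x‖ ^ 2 - inner ℝ x a) := by gcongr; exact real_inner_le_norm x a
      _ = inner ℝ (‖x‖ ^ (p - 2) • x) (x - a) := by
          rw [real_inner_smul_left, inner_sub_right, real_inner_self_eq_norm_sq]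
  have tangent := mul_rpow_sub_one_mul_sub_le hp (norm_nonneg x) (norm_nonneg a)
  nlinarith

lemma norm_add_rpow_le (hp : 2 ≤ p) (a h : E) :
    ‖a + h‖ ^ p ≤ ‖a‖ ^ p + p * inner ℝ (‖a‖ ^ (p - 2) • a) h
      + p ^ 2 * 2 ^ (p - 2) * (‖a‖ ^ (p - 2) * ‖h‖ ^ 2 + ‖h‖ ^ p) := by
  have gradient_diff_le : inner ℝ (‖a + h‖ ^ (p - 2) • (a + h) - ‖a‖ ^ (p - 2) • a) h
      ≤ p * 2 ^ (p - 2) * (‖a‖ ^ (p - 2) * ‖h‖ ^ 2 + ‖h‖ ^ p) :=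
    calc inner ℝ (‖a + h‖ ^ (p - 2) • (a + h) - ‖a‖ ^ (p - 2) • a) h
        ≤ ‖‖a + h‖ ^ (p - 2) • (a + h) - ‖a‖ ^ (p - 2) • a‖ * ‖h‖ := real_inner_le_norm _ _
      _ ≤ p * (‖a‖ + ‖h‖) ^ (p - 2) * ‖h‖ * ‖h‖ := by
          gcongr
          simpa using norm_rpow_smul_sub_rpow_smul_le (q := p - 2) (by linarith)
            (norm_add_le a h) (le_add_of_nonneg_right (norm_nonneg h))
      _ ≤ p * (2 ^ (p - 2) * (‖a‖ ^ (p - 2) + ‖h‖ ^ (p - 2))) * ‖h‖ * ‖h‖ := by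
          gcongr
          exact add_rpow_le_two_rpow_mul (norm_nonneg a) (norm_nonneg h) (by linarith)
      _ = p * 2 ^ (p - 2) * (‖a‖ ^ (p - 2) * ‖h‖ ^ 2 + ‖h‖ ^ (p - 2) * ‖h‖ ^ (2 : ℝ)) := by
          rw [Real.rpow_two]; ring
      _ = p * 2 ^ (p - 2) * (‖a‖ ^ (p - 2) * ‖h‖ ^ 2 + ‖h‖ ^ p) := by
          rw [← Real.rpow_add_of_nonneg (norm_nonneg h) (by linarith) zero_le_two, sub_add_cancel]
  have tangent := norm_rpow_le_norm_rpow_add_inner (by linarith : 1 ≤ p) (a + h) a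
  rw [add_sub_cancel_left] at tangent
  rw [inner_sub_left] at gradient_diff_le
  nlinarith

end NormPowers

section CenteredNoise

lemma memLp_ofReal_iff_integrable_norm_rpow {Ω E : Type*} [MeasurableSpace Ω] {μ : Measure Ω}
    [NormedAddCommGroup E] {X : Ω → E} {p : ℝ} (hX : AEStronglyMeasurable X μ) (hp : 0 < p) :
    MemLp X (ENNReal.ofReal p) μ ↔ Integrable (fun ω ↦ ‖X ω‖ ^ p) μ := by
  rw [← integrable_norm_rpow_iff hX (ENNReal.ofReal_pos.2 hp).ne' ENNReal.ofReal_ne_top,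
    ENNReal.toReal_ofReal hp.le]

variable {Ω E : Type*} [MeasurableSpace Ω] {P : Measure Ω} [IsProbabilityMeasure P]
  [NormedAddCommGroup E] [InnerProductSpace ℝ E] [CompleteSpace E] {p : ℝ} {X : Ω → E}

lemma integral_norm_add_rpow_le (hp : 2 ≤ p) (hX : MemLp X (ENNReal.ofReal p) P)
    (hX0 : ∫ ω, X ω ∂P = 0) (a : E) :
    ∫ ω, ‖a + X ω‖ ^ p ∂P ≤ ‖a‖ ^ p
      + p ^ 2 * 2 ^ (p - 2) * (‖a‖ ^ (p - 2) * ∫ ω, ‖X ω‖ ^ 2 ∂P + ∫ ω, ‖X ω‖ ^ p ∂P) := by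
  have integrable_X : Integrable X P :=
    hX.integrable (ENNReal.one_le_ofReal.2 (by linarith))
  have integrable_sq : Integrable (fun ω ↦ ‖X ω‖ ^ 2) P :=
    (hX.mono_exponent (p := 2) (by simpa using ENNReal.ofReal_le_ofReal hp)).integrable_norm_pow
      two_ne_zero
  have integrable_rpow : Integrable (fun ω ↦ ‖X ω‖ ^ p) P :=
    (memLp_ofReal_iff_integrable_norm_rpow hX.1 (by linarith)).1 hX
  have integrable_linear :
      Integrable (fun ω ↦ ‖a‖ ^ p + p * inner ℝ (‖a‖ ^ (p - 2) • a) (X ω)) P :=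
    (integrable_const _).add ((integrable_X.const_inner _).const_mul p)
  have integrable_remainder : Integrable
      (fun ω ↦ p ^ 2 * 2 ^ (p - 2) * (‖a‖ ^ (p - 2) * ‖X ω‖ ^ 2 + ‖X ω‖ ^ p)) P :=
    ((integrable_sq.const_mul _).add integrable_rpow).const_mul _
  calc ∫ ω, ‖a + X ω‖ ^ p ∂P
      ≤ ∫ ω, (‖a‖ ^ p + p * inner ℝ (‖a‖ ^ (p - 2) • a) (X ω)
          + p ^ 2 * 2 ^ (p - 2) * (‖a‖ ^ (p - 2) * ‖X ω‖ ^ 2 + ‖X ω‖ ^ p)) ∂P :=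
        integral_mono_of_nonneg (.of_forall fun _ ↦ by positivity)
          (integrable_linear.add integrable_remainder)
          (.of_forall fun ω ↦ norm_add_rpow_le hp a (X ω))
    _ = _ := by
        rw [integral_add integrable_linear integrable_remainder,
          integral_add (integrable_const _) ((integrable_X.const_inner _).const_mul p),
          integral_const_mul, integral_const_mul, integral_inner integrable_X, hX0,
          integral_add (integrable_sq.const_mul _) integrable_rpow, integral_const_mul]
        simp

lemma exists_integral_norm_add_smul_rpow_le (hp : 2 ≤ p) (hX : MemLp X (ENNReal.ofReal p) P)
    (hX0 : ∫ ω, X ω ∂P = 0) :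
    ∃ K, 0 ≤ K ∧ ∀ (a : E) (σ : ℝ), ∫ ω, ‖a + σ • X ω‖ ^ p ∂P
      ≤ ‖a‖ ^ p + K * (‖a‖ ^ (p - 2) * σ ^ 2 + (σ ^ 2) ^ (p / 2)) := by
  set m₂ := ∫ ω, ‖X ω‖ ^ 2 ∂P
  set mₚ := ∫ ω, ‖X ω‖ ^ p ∂P
  have m₂_nonneg : 0 ≤ m₂ := integral_nonneg fun _ ↦ by positivity
  have mₚ_nonneg : 0 ≤ mₚ := integral_nonneg fun _ ↦ by positivity
  refine ⟨p ^ 2 * 2 ^ (p - 2) * (m₂ + mₚ), by positivity, fun a σ ↦ ?_⟩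
  have second_moment : ∫ ω, ‖σ • X ω‖ ^ 2 ∂P = σ ^ 2 * m₂ := by
    simp only [norm_smul, mul_pow, Real.norm_eq_abs, sq_abs, integral_const_mul, m₂]
  have abs_rpow : |σ| ^ p = (σ ^ 2) ^ (p / 2) := by
    rw [← sq_abs, ← Real.rpow_two, ← Real.rpow_mul (abs_nonneg σ), mul_div_cancel₀ p two_ne_zero]
  have pth_moment : ∫ ω, ‖σ • X ω‖ ^ p ∂P = (σ ^ 2) ^ (p / 2) * mₚ := by
    simp only [norm_smul, Real.norm_eq_abs, Real.mul_rpow (abs_nonneg σ) (norm_nonneg _),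
      integral_const_mul, abs_rpow, mₚ]
  calc ∫ ω, ‖a + σ • X ω‖ ^ p ∂P
      ≤ ‖a‖ ^ p + p ^ 2 * 2 ^ (p - 2) *
          (‖a‖ ^ (p - 2) * (σ ^ 2 * m₂) + (σ ^ 2) ^ (p / 2) * mₚ) := by
        rw [← second_moment, ← pth_moment]
        exact integral_norm_add_rpow_le hp (hX.const_smul σ) (by simp [integral_smul, hX0]) a
    _ ≤ ‖a‖ ^ p + p ^ 2 * 2 ^ (p - 2) * ((m₂ + mₚ) *
          (‖a‖ ^ (p - 2) * σ ^ 2 + (σ ^ 2) ^ (p / 2))) := by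
        gcongr
        have := mul_nonneg mₚ_nonneg (by positivity : 0 ≤ ‖a‖ ^ (p - 2) * σ ^ 2)
        have := mul_nonneg m₂_nonneg (by positivity : 0 ≤ (σ ^ 2) ^ (p / 2))
        linarith
    _ = _ := by ring

end CenteredNoise

section Contraction

variable {p ρ r : ℝ}

lemma rpow_add_rpow_mul_le_of_le_one_sub_mul {t y v : ℝ} (hp : 2 ≤ p) (hρ : ρ < 2) (hr : 0 < r)
    (ht : 0 < t) (hy : 0 ≤ y) (hv : 0 ≤ v) (hyt : y ≤ (1 - r * t ^ (-ρ)) * t) :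
    y ^ p + y ^ (p - 2) * v ≤ t ^ p - r / 2 * t ^ (p - ρ)
      + (r / 2)⁻¹ ^ ((p - 2) / (2 - ρ)) * v ^ ((p - ρ) / (2 - ρ)) := by
  have contraction_gain : y ^ p ≤ t ^ p - r * t ^ (p - ρ) :=
    rpow_le_rpow_sub_of_le_one_sub_mul (by linarith) hr.le hy ht hyt
  have y_le_t : y ≤ t := by nlinarith [mul_pos hr (Real.rpow_pos_of_pos ht (-ρ))]
  have absorbed : y ^ (p - 2) * v ≤ r / 2 * t ^ (p - ρ)
      + (r / 2)⁻¹ ^ ((p - 2) / (2 - ρ)) * v ^ ((p - ρ) / (2 - ρ)) :=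
    calc y ^ (p - 2) * v ≤ t ^ (p - 2) * v := by gcongr
      _ ≤ _ := by
        simpa only [sub_add_sub_cancel] using rpow_mul_le_mul_rpow_add_rpow (α := p - 2)
          (β := 2 - ρ) ht.le hv (half_pos hr) (by linarith) (by linarith)
  linarith

lemma rpow_add_rpow_mul_le_of_le {t y v M₀ K₀ : ℝ} (hp : 2 ≤ p) (hρ : ρ < 2) (hr : 0 ≤ r)
    (ht : 0 ≤ t) (hy : 0 ≤ y) (hv : 0 ≤ v) (htM : t ≤ M₀) (hyK : y ≤ K₀) :
    y ^ p + y ^ (p - 2) * v ≤ t ^ p - r / 2 * t ^ (p - ρ)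
      + (K₀ ^ p + K₀ ^ (p - 2) + r / 2 * M₀ ^ (p - ρ)) * (1 + v ^ ((p - ρ) / (2 - ρ))) := by
  have v_le : v ≤ 1 + v ^ ((p - ρ) / (2 - ρ)) := by
    simpa using rpow_le_one_add_rpow hv zero_le_one
      ((one_le_div (by linarith)).2 (by linarith : 2 - ρ ≤ p - ρ))
  have one_le : 1 ≤ 1 + v ^ ((p - ρ) / (2 - ρ)) := le_add_of_nonneg_right (by positivity)
  have M₀_nonneg : 0 ≤ M₀ := ht.trans htM
  have K₀_nonneg : 0 ≤ K₀ := hy.trans hyK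
  have y_rpow_le : y ^ p ≤ K₀ ^ p * (1 + v ^ ((p - ρ) / (2 - ρ))) :=
    (by gcongr : y ^ p ≤ K₀ ^ p).trans (le_mul_of_one_le_right (by positivity) one_le)
  have cross_le : y ^ (p - 2) * v ≤ K₀ ^ (p - 2) * (1 + v ^ ((p - ρ) / (2 - ρ))) := by
    gcongr
  have loss_le :
      r / 2 * t ^ (p - ρ) ≤ r / 2 * M₀ ^ (p - ρ) * (1 + v ^ ((p - ρ) / (2 - ρ))) :=
    (by gcongr; linarith : r / 2 * t ^ (p - ρ) ≤ r / 2 * M₀ ^ (p - ρ)).trans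
      (le_mul_of_one_le_right (by positivity) one_le)
  linarith [Real.rpow_nonneg ht p]

variable {E : Type*} [NormedAddCommGroup E] {M₀ K₀ : ℝ} {g : E → E}

lemma exists_norm_rpow_add_norm_rpow_mul_le (hp : 2 ≤ p) (hρ : ρ < 2) (hr : 0 < r) (hM₀ : 0 < M₀)
    (hg_large : ∀ u, M₀ ≤ ‖u‖ → ‖g u‖ ≤ (1 - r * ‖u‖ ^ (-ρ)) * ‖u‖)
    (hg_small : ∀ u, ‖u‖ ≤ M₀ → ‖g u‖ ≤ K₀) :
    ∃ A, 0 ≤ A ∧ ∀ (z : E) (v : ℝ), 0 ≤ v →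
      ‖g z‖ ^ p + ‖g z‖ ^ (p - 2) * v
        ≤ ‖z‖ ^ p - r / 2 * ‖z‖ ^ (p - ρ) + A * (1 + v ^ ((p - ρ) / (2 - ρ))) := by
  have K₀_nonneg : 0 ≤ K₀ := (norm_nonneg _).trans (hg_small 0 (by simpa using hM₀.le))
  set A_large := (r / 2)⁻¹ ^ ((p - 2) / (2 - ρ))
  set A_small := K₀ ^ p + K₀ ^ (p - 2) + r / 2 * M₀ ^ (p - ρ)
  have A_large_nonneg : 0 ≤ A_large := by positivity
  have A_small_nonneg : 0 ≤ A_small := by positivity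
  refine ⟨A_large + A_small, by positivity, fun z v hv ↦ ?_⟩
  rcases le_total M₀ ‖z‖ with hz | hz
  · refine (rpow_add_rpow_mul_le_of_le_one_sub_mul hp hρ hr (hM₀.trans_le hz) (norm_nonneg _) hv
      (hg_large z hz)).trans ?_
    gcongr <;> linarith
  · refine (rpow_add_rpow_mul_le_of_le hp hρ hr.le (norm_nonneg _) (norm_nonneg _) hv hz
      (hg_small z hz)).trans (add_le_add le_rfl ?_)
    exact mul_le_mul_of_nonneg_right (le_add_of_nonneg_left A_large_nonneg) (by positivity)

end Contraction

section Drift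

variable {Ω E : Type*} [MeasurableSpace Ω] {P : Measure Ω} [IsProbabilityMeasure P]
  [NormedAddCommGroup E] [InnerProductSpace ℝ E] [CompleteSpace E]
  {ρ r M₀ K₀ : ℝ} {ε : Ω → E} {g : E → E}

lemma exists_integral_norm_rpow_le_drift {p : ℝ} (hp : 2 ≤ p) (hρ0 : 0 ≤ ρ) (hρ2 : ρ < 2)
    (hε : MemLp ε (ENNReal.ofReal p) P) (hmean : ∫ ω, ε ω ∂P = 0) (hr : 0 < r) (hM₀ : 0 < M₀)
    (hg_large : ∀ u, M₀ ≤ ‖u‖ → ‖g u‖ ≤ (1 - r * ‖u‖ ^ (-ρ)) * ‖u‖)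
    (hg_small : ∀ u, ‖u‖ ≤ M₀ → ‖g u‖ ≤ K₀) :
    ∃ A, 0 ≤ A ∧ ∀ (z : E) (σ : ℝ), ∫ ω, ‖g z + σ • ε ω‖ ^ p ∂P
      ≤ ‖z‖ ^ p - r / 2 * ‖z‖ ^ (p - ρ) + A * (1 + (σ ^ 2) ^ ((p - ρ) / (2 - ρ))) := by
  obtain ⟨K, hK, noise_bound⟩ := exists_integral_norm_add_smul_rpow_le hp hε hmean
  obtain ⟨A, hA, contraction_bound⟩ :=
    exists_norm_rpow_add_norm_rpow_mul_le hp hρ2 hr hM₀ hg_large hg_small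
  set γ := (p - ρ) / (2 - ρ)
  have half_p_le : p / 2 ≤ γ := by
    rw [div_le_div_iff₀ two_pos (by linarith)]
    nlinarith
  refine ⟨A * (1 + K ^ γ) + K, by positivity, fun z σ ↦ ?_⟩
  have contraction_z := contraction_bound z (K * σ ^ 2) (by positivity)
  rw [Real.mul_rpow hK (sq_nonneg σ)] at contraction_z
  have noise_power_le : (σ ^ 2) ^ (p / 2) ≤ 1 + (σ ^ 2) ^ γ :=
    rpow_le_one_add_rpow (sq_nonneg σ) (by linarith) half_p_le
  calc ∫ ω, ‖g z + σ • ε ω‖ ^ p ∂P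
      ≤ ‖g z‖ ^ p + ‖g z‖ ^ (p - 2) * (K * σ ^ 2) + K * (σ ^ 2) ^ (p / 2) :=
        (noise_bound (g z) σ).trans_eq (by ring)
    _ ≤ ‖z‖ ^ p - r / 2 * ‖z‖ ^ (p - ρ) + A * (1 + K ^ γ * (σ ^ 2) ^ γ)
          + K * (1 + (σ ^ 2) ^ γ) := by gcongr
    _ ≤ _ := by
        have : 0 ≤ A * (K ^ γ + (σ ^ 2) ^ γ) := by positivity
        linarith

theorem stmt_9_general {s₀ b C₀ : ℝ} (hs₀ : 1 ≤ s₀) (hρ0 : 0 ≤ ρ) (hρ2 : ρ < 2)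
    (hb : (2 * s₀ - ρ) / (s₀ * (2 - ρ)) ≤ b)
    (hε : MemLp ε (ENNReal.ofReal (2 * s₀)) P) (hmean : ∫ ω, ε ω ∂P = 0)
    (hr : 0 < r) (hM₀ : 0 < M₀)
    (hg_large : ∀ u, M₀ ≤ ‖u‖ → ‖g u‖ ≤ (1 - r * ‖u‖ ^ (-ρ)) * ‖u‖)
    (hg_small : ∀ u, ‖u‖ ≤ M₀ → ‖g u‖ ≤ K₀) (hC₀ : 0 ≤ C₀) :
    ∃ rt : ℝ, 0 < rt ∧ ∃ C : ℝ, ∀ (z : E) (w σ : ℝ), 0 ≤ w → σ ^ 2 ≤ C₀ * (1 + w) →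
      ∫ ω, ‖g z + σ • ε ω‖ ^ (2 * s₀) ∂P
        ≤ ‖z‖ ^ (2 * s₀) - rt * ‖z‖ ^ (2 * s₀ * (1 - ρ / (2 * s₀))) + C * w ^ (b * s₀) + C := by
  obtain ⟨A, hA, drift⟩ := exists_integral_norm_rpow_le_drift (by linarith) hρ0 hρ2 hε hmean hr
    hM₀ hg_large hg_small
  set γ := (2 * s₀ - ρ) / (2 - ρ) with γ_def
  have γ_nonneg : 0 ≤ γ := div_nonneg (by linarith) (by linarith)
  have γ_le : γ ≤ b * s₀ := by
    rwa [mul_comm s₀, ← div_div, ← γ_def, div_le_iff₀ (by linarith)] at hb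
  have exponent_eq : 2 * s₀ * (1 - ρ / (2 * s₀)) = 2 * s₀ - ρ := by field_simp
  refine ⟨r / 2, half_pos hr, A * (1 + C₀ ^ γ * 2 ^ γ * 2), fun z w σ hw hσ ↦ ?_⟩
  have volatility_le : (σ ^ 2) ^ γ ≤ C₀ ^ γ * 2 ^ γ * (2 + w ^ (b * s₀)) :=
    calc (σ ^ 2) ^ γ ≤ (C₀ * (1 + w)) ^ γ := by gcongr
      _ = C₀ ^ γ * (1 + w) ^ γ := Real.mul_rpow hC₀ (by linarith)
      _ ≤ C₀ ^ γ * (2 ^ γ * (1 ^ γ + w ^ γ)) := by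
          gcongr
          exact add_rpow_le_two_rpow_mul zero_le_one hw γ_nonneg
      _ ≤ C₀ ^ γ * (2 ^ γ * (1 + (1 + w ^ (b * s₀)))) := by
          rw [Real.one_rpow]
          gcongr
          exact rpow_le_one_add_rpow hw γ_nonneg γ_le
      _ = _ := by ring
  rw [exponent_eq]
  have slack : 0 ≤ A * (w ^ (b * s₀) * (1 + C₀ ^ γ * 2 ^ γ)) := by positivity
  linarith [drift z σ, mul_le_mul_of_nonneg_left volatility_le hA]

end Drift

/-- drift bound for the conditional-mean component V₁.  Under the stated
conditions on s₀, ρ, α = 1−ρ/(2s₀), b, on the error distribution, and on g, for any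
C₀ > 0 there exist r̃ > 0 and C < ∞ such that for all z ∈ ℝ, w ≥ 0 and σ ≥ 0 with
σ² ≤ C₀(1+w): E[|g(z)+σε|^{2s₀}] ≤ |z|^{2s₀} − r̃|z|^{2s₀α} + C w^{bs₀} + C. -/
theorem stmt_9 (s₀ ρ b : ℝ) (hs₀ : 1 ≤ s₀) (hρ0 : 0 < ρ) (hρ2 : ρ < 2)
    (hb : 1 ≤ b) (hb1 : s₀ = 1 → b = 1)
    (hb2 : 1 < s₀ → (2 * s₀ - ρ) / (s₀ * (2 - ρ)) < b)
    (με : Measure ℝ) (hprob : IsProbabilityMeasure με)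
    (hmean : (∫ e, e ∂με) = 0) (hvar : (∫ e, e ^ 2 ∂με) = 1)
    (hmom : Integrable (fun e => |e| ^ (2 * s₀)) με)
    (g : ℝ → ℝ) (hgmeas : Measurable g)
    (r M₀ K₀ : ℝ) (hr : 0 < r) (hM₀ : 0 < M₀) (hK₀ : 0 < K₀)
    (hg1 : ∀ u : ℝ, M₀ ≤ |u| → |g u| ≤ (1 - r * |u| ^ (-ρ)) * |u|)
    (hg2 : ∀ u : ℝ, |u| ≤ M₀ → |g u| ≤ K₀)
    (C₀ : ℝ) (hC₀ : 0 < C₀) :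
    ∃ rt : ℝ, 0 < rt ∧ ∃ C : ℝ,
      ∀ (z w σ : ℝ), 0 ≤ w → 0 ≤ σ → σ ^ 2 ≤ C₀ * (1 + w) →
        (∫ e, |g z + σ * e| ^ (2 * s₀) ∂με)
          ≤ |z| ^ (2 * s₀) - rt * |z| ^ (2 * s₀ * (1 - ρ / (2 * s₀)))
            + C * w ^ (b * s₀) + C := by
  have hε : MemLp id (ENNReal.ofReal (2 * s₀)) με :=
    (memLp_ofReal_iff_integrable_norm_rpow aestronglyMeasurable_id (by linarith)).2 hmom
  have hb' : (2 * s₀ - ρ) / (s₀ * (2 - ρ)) ≤ b := by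
    rcases hs₀.eq_or_lt with rfl | h
    · simpa [(sub_pos.2 hρ2).ne'] using hb
    · exact (hb2 h).le
  obtain ⟨rt, hrt, C, drift⟩ :=
    stmt_9_general hs₀ hρ0.le hρ2 hb' hε hmean hr hM₀ hg1 hg2 hC₀.le
  exact ⟨rt, hrt, C, fun z w σ hw _ hσ ↦ drift z w σ hw hσ⟩
end

section
/- Let q ≥ 1, m ≥ 1, ω > 0 and α₁,…,α_q ≥ 0. Let ε be a real random variable with E[|ε|^{2m}] < ∞, and let ‖·‖_• be a monotone vector norm on ℝ^q such that λ := sup_{‖x‖_•=1}(E[‖Λ_ε x‖_•^m])^{1/m} < 1, where Λ_ε is the random companion matrix with first row (α₁ε²,…,α_qε²), ones on the subdiagonal and zeros elsewhere. Then there exist constants λ̃ ∈ (0,1) and C < ∞ such that for all ζ₀, ζ₁, …, ζ_q ∈ (0,1] and all ξ ∈ ℝ^q with nonnegative entries, E[‖Λ_{ζ,ε}ξ + ζ₀ω ε² e₁‖_•^m] ≤ (1−λ̃)‖ξ‖_•^m + C, where Λ_{ζ,ε} is the companion matrix with first row (α₁ζ₁ε²,…,α_qζ_qε²), ones on the subdiagonal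 and zeros elsewhere, and e₁ = (1,0,…,0)' ∈ ℝ^q. -/
open MeasureTheory

/-- The random companion matrix Λ_ε with first row (α₁ε²,…,α_qε²) and ones on the
subdiagonal, as a function of the realization e of ε. -/
def lambdaMat (q : ℕ) (αc : ℕ → ℝ) (e : ℝ) : Matrix (Fin q) (Fin q) ℝ :=
  Matrix.of fun i j =>
    if (i : ℕ) = 0 then αc ((j : ℕ) + 1) * e ^ 2
    else if (i : ℕ) = (j : ℕ) + 1 then 1 else 0

/-- The companion matrix Λ_{ζ,ε} with first row (α₁ζ₁ε²,…,α_qζ_qε²) and ones on the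
subdiagonal. -/
def lambdaZetaMat (q : ℕ) (αc : ℕ → ℝ) (ζv : ℕ → ℝ) (e : ℝ) :
    Matrix (Fin q) (Fin q) ℝ :=
  Matrix.of fun i j =>
    if (i : ℕ) = 0 then αc ((j : ℕ) + 1) * ζv ((j : ℕ) + 1) * e ^ 2
    else if (i : ℕ) = (j : ℕ) + 1 then 1 else 0

/-!
For entrywise nonnegative `Λ` and a monotone norm, `‖Λ_ζ ξ + ζ₀ωε²e₁‖ ≤ ‖Λ |ξ| + |ω|ε²e₁‖`, so the
claim reduces to one random affine map `x ↦ A x + b` with `L^m` coefficients. For `0 < s < 1` the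
number `a + b` is a convex combination of `a / s` and `b / (1 - s)`, whence
`(a + b)^m ≤ (a / s)^m + (b / (1 - s))^m` for every `m ≥ 0`. With `a = ‖A x‖` and `b = ‖b‖`, taking
expectations gives the factor `(λ / s)^m`, which is less than `1` once `λ < s < 1`.
-/

open scoped Matrix

lemma add_rpow_le_div_rpow_add_div_rpow {a b s m : ℝ} (ha : 0 ≤ a) (hb : 0 ≤ b)
    (hs₀ : 0 < s) (hs₁ : s < 1) (hm : 0 ≤ m) :
    (a + b) ^ m ≤ (a / s) ^ m + (b / (1 - s)) ^ m := by
  have hs₁' : 0 < 1 - s := sub_pos.2 hs₁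
  have hle_max : a + b ≤ max (a / s) (b / (1 - s)) := calc
    a + b = s * (a / s) + (1 - s) * (b / (1 - s)) := by field_simp
    _ ≤ s * max (a / s) (b / (1 - s)) + (1 - s) * max (a / s) (b / (1 - s)) := by
      gcongr
      exacts [le_max_left _ _, le_max_right _ _]
    _ = max (a / s) (b / (1 - s)) := by ring
  calc (a + b) ^ m ≤ max (a / s) (b / (1 - s)) ^ m := by gcongr
    _ = max ((a / s) ^ m) ((b / (1 - s)) ^ m) :=
      (Real.monotoneOn_rpow_Ici_of_exponent_nonneg hm).map_max
        (div_nonneg ha hs₀.le) (div_nonneg hb hs₁'.le)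
    _ ≤ (a / s) ^ m + (b / (1 - s)) ^ m := max_le_add_of_nonneg (by positivity) (by positivity)

lemma abs_mulVec_le_mulVec {ι κ : Type*} [Fintype κ] {A B : Matrix ι κ ℝ}
    (hAB : ∀ i j, |A i j| ≤ B i j) (x : κ → ℝ) (i : ι) : |(A *ᵥ x) i| ≤ (B *ᵥ |x|) i :=
  calc |(A *ᵥ x) i| ≤ ∑ j, |A i j * x j| := Finset.abs_sum_le_sum_abs _ _
    _ ≤ ∑ j, B i j * |x| j := by
      gcongr with j
      rw [abs_mul]
      exact mul_le_mul_of_nonneg_right (hAB i j) (abs_nonneg _)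

lemma memLp_mulVec {Ω ι κ : Type*} [MeasurableSpace Ω] {μ : Measure Ω} {p : ENNReal}
    [Fintype ι] [Fintype κ] {A : Ω → Matrix ι κ ℝ} (hA : ∀ i j, MemLp (A · i j) p μ)
    (x : κ → ℝ) : MemLp (fun ω => A ω *ᵥ x) p μ :=
  MemLp.of_eval fun i => memLp_finsetSum _ fun j _ => (hA i j).mul_const (x j)

lemma integrable_rpow_of_memLp {Ω : Type*} [MeasurableSpace Ω] {μ : Measure Ω} {m : ℝ}
    {f : Ω → ℝ} (hf : MemLp f (ENNReal.ofReal m) μ) (hf₀ : ∀ ω, 0 ≤ f ω) (hm : 0 < m) :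
    Integrable (fun ω => f ω ^ m) μ := by
  simpa [abs_of_nonneg (hf₀ _), ENNReal.toReal_ofReal hm.le] using
    hf.integrable_norm_rpow (by simpa using hm) ENNReal.ofReal_ne_top

namespace IsMonotoneNorm

variable {d : ℕ} {N : (Fin d → ℝ) → ℝ}

lemma apply_abs (hmono : IsMonotoneNorm N) (x : Fin d → ℝ) : N |x| = N x :=
  le_antisymm (hmono _ _ fun i => (abs_abs (x i)).le) (hmono _ _ fun i => (abs_abs (x i)).ge)

lemma mulVec_add_le {κ : Type*} [Fintype κ] (hmono : IsMonotoneNorm N)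
    {A B : Matrix (Fin d) κ ℝ} {a b : Fin d → ℝ} (hAB : ∀ i j, |A i j| ≤ B i j)
    (hab : ∀ i, |a i| ≤ b i) (x : κ → ℝ) :
    N (A *ᵥ x + a) ≤ N (B *ᵥ |x| + b) :=
  hmono _ _ fun i => calc
    |(A *ᵥ x + a) i| ≤ |(A *ᵥ x) i| + |a i| := abs_add_le _ _
    _ ≤ (B *ᵥ |x| + b) i := add_le_add (abs_mulVec_le_mulVec hAB x i) (hab i)
    _ ≤ |(B *ᵥ |x| + b) i| := le_abs_self _

end IsMonotoneNorm

/-- The contraction factor `λ = sup_{N x = 1} (E (N (A x))^m)^{1/m}` of the random matrix `A`. It is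
meaningful only if the supremum is over a bounded set, as `sSup` is `0` otherwise. -/
noncomputable def contractionFactor {Ω : Type*} [MeasurableSpace Ω] {d : ℕ}
    (N : (Fin d → ℝ) → ℝ) (m : ℝ) (A : Ω → Matrix (Fin d) (Fin d) ℝ) (μ : Measure Ω) : ℝ :=
  sSup {c : ℝ | ∃ x : Fin d → ℝ, N x = 1 ∧ c = (∫ ω, N (A ω *ᵥ x) ^ m ∂μ) ^ (1 / m)}

namespace IsVectorNorm

variable {d : ℕ} {N : (Fin d → ℝ) → ℝ}

lemma nonneg (hN : IsVectorNorm N) (x : Fin d → ℝ) : 0 ≤ N x := hN.1 x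

lemma map_smul (hN : IsVectorNorm N) (c : ℝ) (x : Fin d → ℝ) : N (c • x) = |c| * N x :=
  hN.2.2.1 c x

lemma add_le (hN : IsVectorNorm N) (x y : Fin d → ℝ) : N (x + y) ≤ N x + N y := hN.2.2.2 x y

lemma map_zero (hN : IsVectorNorm N) : N 0 = 0 := (hN.2.1 0).2 rfl

lemma pos (hN : IsVectorNorm N) {x : Fin d → ℝ} (hx : x ≠ 0) : 0 < N x :=
  (hN.nonneg x).lt_of_ne fun h => hx ((hN.2.1 x).1 h.symm)

/-- A vector norm as a bundled seminorm, giving access to the library on convexity and boundedness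
of seminorms. -/
def toSeminorm (hN : IsVectorNorm N) : Seminorm ℝ (Fin d → ℝ) := Seminorm.of N hN.add_le hN.map_smul

lemma continuous (hN : IsVectorNorm N) : Continuous N :=
  hN.toSeminorm.convexOn.locallyLipschitz.continuous

lemma exists_le_mul_norm (hN : IsVectorNorm N) : ∃ K, 0 < K ∧ ∀ x, N x ≤ K * ‖x‖ :=
  hN.toSeminorm.bound_of_continuous_normedSpace hN.continuous

lemma exists_norm_le_mul (hN : IsVectorNorm N) : ∃ K, 0 < K ∧ ∀ x, ‖x‖ ≤ K * N x := by
  obtain ⟨c, hc, hcN⟩ := (isCompact_sphere (0 : Fin d → ℝ) 1).exists_forall_le'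
    hN.continuous.continuousOn fun x hx => hN.pos (ne_zero_of_mem_unit_sphere ⟨x, hx⟩)
  refine ⟨c⁻¹, inv_pos.2 hc, fun x => ?_⟩
  obtain rfl | hx := eq_or_ne x 0
  · simp [hN.map_zero]
  have hx' : 0 < ‖x‖ := norm_pos_iff.2 hx
  have hunit : c ≤ N (‖x‖⁻¹ • x) :=
    hcN _ (by simpa using norm_smul_inv_norm (𝕜 := ℝ) hx)
  rw [hN.map_smul, abs_of_pos (inv_pos.2 hx'), le_inv_mul_iff₀ hx'] at hunit
  rwa [le_inv_mul_iff₀ hc, mul_comm]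

lemma mulVec_le_norm_mul_sum_col {κ : Type*} [Fintype κ] (hN : IsVectorNorm N)
    (A : Matrix (Fin d) κ ℝ) (x : κ → ℝ) : N (A *ᵥ x) ≤ ‖x‖ * ∑ j, N (A.col j) :=
  calc N (A *ᵥ x) = N (∑ j, x j • A.col j) := by
        simp only [Matrix.mulVec_eq_sum, op_smul_eq_smul, Matrix.col_def]
    _ ≤ ∑ j, N (x j • A.col j) :=
      Finset.le_sum_of_subadditive N hN.map_zero.le hN.add_le _ _
    _ ≤ ∑ j, ‖x‖ * N (A.col j) := by
      gcongr with j
      rw [hN.map_smul]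
      exact mul_le_mul_of_nonneg_right (norm_le_pi_norm x j) (hN.nonneg _)
    _ = ‖x‖ * ∑ j, N (A.col j) := (Finset.mul_sum ..).symm

section Moments

variable {Ω : Type*} [MeasurableSpace Ω] {μ : Measure Ω} {m : ℝ}
  {A : Ω → Matrix (Fin d) (Fin d) ℝ} {b f : Ω → Fin d → ℝ}

lemma memLp_comp (hN : IsVectorNorm N) {p : ENNReal} (hf : MemLp f p μ) :
    MemLp (fun ω => N (f ω)) p μ := by
  obtain ⟨K, -, hK⟩ := hN.exists_le_mul_norm
  refine hf.of_le_mul (c := K) (hN.continuous.comp_aestronglyMeasurable hf.1)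
    (.of_forall fun ω => ?_)
  rw [Real.norm_of_nonneg (hN.nonneg _)]
  exact hK _

lemma integrable_rpow_comp (hN : IsVectorNorm N) (hm : 0 < m)
    (hf : MemLp f (ENNReal.ofReal m) μ) : Integrable (fun ω => N (f ω) ^ m) μ :=
  integrable_rpow_of_memLp (hN.memLp_comp hf) (fun _ => hN.nonneg _) hm

lemma integral_rpow_comp_nonneg (hN : IsVectorNorm N) : 0 ≤ ∫ ω, N (f ω) ^ m ∂μ :=
  integral_nonneg fun _ => Real.rpow_nonneg (hN.nonneg _) _

lemma contractionFactor_nonneg (hN : IsVectorNorm N) : 0 ≤ contractionFactor N m A μ := by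
  refine Real.sSup_nonneg ?_
  rintro _ ⟨x, -, rfl⟩
  exact Real.rpow_nonneg hN.integral_rpow_comp_nonneg _

lemma exists_integral_rpow_mulVec_le (hN : IsVectorNorm N) (hm : 0 < m)
    (hA : ∀ i j, MemLp (A · i j) (ENNReal.ofReal m) μ) :
    ∃ D, ∀ x, N x = 1 → ∫ ω, N (A ω *ᵥ x) ^ m ∂μ ≤ D := by
  obtain ⟨K, hK, hKN⟩ := hN.exists_norm_le_mul
  have hcol : MemLp (fun ω => K * ∑ j, N ((A ω).col j)) (ENNReal.ofReal m) μ :=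
    (memLp_finsetSum _ fun j _ =>
      hN.memLp_comp (MemLp.of_eval fun i => hA i j)).const_mul K
  have hcol_nonneg (ω : Ω) : 0 ≤ ∑ j, N ((A ω).col j) :=
    Finset.sum_nonneg fun j _ => hN.nonneg _
  refine ⟨∫ ω, (K * ∑ j, N ((A ω).col j)) ^ m ∂μ, fun x hx => ?_⟩
  have hint : Integrable (fun ω => (K * ∑ j, N ((A ω).col j)) ^ m) μ :=
    integrable_rpow_of_memLp hcol (fun ω => mul_nonneg hK.le (hcol_nonneg ω)) hm
  refine integral_mono (hN.integrable_rpow_comp hm (memLp_mulVec hA x)) hint fun ω => ?_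
  refine Real.rpow_le_rpow (hN.nonneg _) ?_ hm.le
  calc N (A ω *ᵥ x) ≤ ‖x‖ * ∑ j, N ((A ω).col j) := hN.mulVec_le_norm_mul_sum_col _ x
    _ ≤ K * ∑ j, N ((A ω).col j) :=
      mul_le_mul_of_nonneg_right (by simpa [hx] using hKN x) (hcol_nonneg ω)

lemma integral_rpow_mulVec_le_of_eq_one (hN : IsVectorNorm N) (hm : 0 < m)
    (hA : ∀ i j, MemLp (A · i j) (ENNReal.ofReal m) μ) {x : Fin d → ℝ} (hx : N x = 1) :
    ∫ ω, N (A ω *ᵥ x) ^ m ∂μ ≤ contractionFactor N m A μ ^ m := by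
  obtain ⟨D, hD⟩ := hN.exists_integral_rpow_mulVec_le hm hA
  have hbdd : BddAbove {c : ℝ | ∃ x : Fin d → ℝ, N x = 1 ∧
      c = (∫ ω, N (A ω *ᵥ x) ^ m ∂μ) ^ (1 / m)} := by
    refine ⟨D ^ (1 / m), ?_⟩
    rintro _ ⟨y, hy, rfl⟩
    exact Real.rpow_le_rpow hN.integral_rpow_comp_nonneg (hD y hy) (by positivity)
  rw [← Real.rpow_inv_le_iff_of_pos hN.integral_rpow_comp_nonneg
    hN.contractionFactor_nonneg hm, ← one_div]
  exact le_csSup hbdd ⟨x, hx, rfl⟩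

lemma integral_rpow_mulVec_le (hN : IsVectorNorm N) (hm : 0 < m)
    (hA : ∀ i j, MemLp (A · i j) (ENNReal.ofReal m) μ) (x : Fin d → ℝ) :
    ∫ ω, N (A ω *ᵥ x) ^ m ∂μ ≤ (contractionFactor N m A μ * N x) ^ m := by
  obtain rfl | hx := eq_or_ne x 0
  · simp [hN.map_zero, Real.zero_rpow hm.ne']
  have hNx : 0 < N x := hN.pos hx
  have hunit : N ((N x)⁻¹ • x) = 1 := by
    rw [hN.map_smul, abs_of_pos (inv_pos.2 hNx), inv_mul_cancel₀ hNx.ne']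
  have hscale (ω : Ω) : N (A ω *ᵥ x) ^ m = N x ^ m * N (A ω *ᵥ ((N x)⁻¹ • x)) ^ m := by
    rw [← Real.mul_rpow hNx.le (hN.nonneg _), Matrix.mulVec_smul, hN.map_smul,
      abs_of_pos (inv_pos.2 hNx), mul_inv_cancel_left₀ hNx.ne']
  calc ∫ ω, N (A ω *ᵥ x) ^ m ∂μ = N x ^ m * ∫ ω, N (A ω *ᵥ ((N x)⁻¹ • x)) ^ m ∂μ := by
        simp_rw [hscale, integral_const_mul]
    _ ≤ N x ^ m * contractionFactor N m A μ ^ m := by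
        gcongr
        exact hN.integral_rpow_mulVec_le_of_eq_one hm hA hunit
    _ = (contractionFactor N m A μ * N x) ^ m := by
        rw [mul_comm, Real.mul_rpow hN.contractionFactor_nonneg hNx.le]

lemma integral_rpow_mulVec_add_le (hN : IsVectorNorm N) (hm : 0 < m)
    (hA : ∀ i j, MemLp (A · i j) (ENNReal.ofReal m) μ) (hb : MemLp b (ENNReal.ofReal m) μ)
    {s : ℝ} (hs₀ : 0 < s) (hs₁ : s < 1) (x : Fin d → ℝ) :
    ∫ ω, N (A ω *ᵥ x + b ω) ^ m ∂μ ≤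
      (contractionFactor N m A μ * N x / s) ^ m + (∫ ω, N (b ω) ^ m ∂μ) / (1 - s) ^ m := by
  have hAx := memLp_mulVec hA x
  have hintA := (hN.integrable_rpow_comp hm hAx).div_const (s ^ m)
  have hintb := (hN.integrable_rpow_comp hm hb).div_const ((1 - s) ^ m)
  have hsplit (ω : Ω) : N (A ω *ᵥ x + b ω) ^ m ≤
      N (A ω *ᵥ x) ^ m / s ^ m + N (b ω) ^ m / (1 - s) ^ m := by
    rw [← Real.div_rpow (hN.nonneg _) hs₀.le, ← Real.div_rpow (hN.nonneg _) (sub_pos.2 hs₁).le]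
    exact (Real.rpow_le_rpow (hN.nonneg _) (hN.add_le _ _) hm.le).trans <|
      add_rpow_le_div_rpow_add_div_rpow (hN.nonneg _) (hN.nonneg _) hs₀ hs₁ hm.le
  calc ∫ ω, N (A ω *ᵥ x + b ω) ^ m ∂μ
      ≤ ∫ ω, (N (A ω *ᵥ x) ^ m / s ^ m + N (b ω) ^ m / (1 - s) ^ m) ∂μ :=
        integral_mono (hN.integrable_rpow_comp hm (hAx.add hb)) (hintA.add hintb) hsplit
    _ = (∫ ω, N (A ω *ᵥ x) ^ m ∂μ) / s ^ m + (∫ ω, N (b ω) ^ m ∂μ) / (1 - s) ^ m := by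
        rw [integral_add hintA hintb, integral_div, integral_div]
    _ ≤ _ := by
        rw [Real.div_rpow (mul_nonneg hN.contractionFactor_nonneg (hN.nonneg x)) hs₀.le]
        gcongr
        exact hN.integral_rpow_mulVec_le hm hA x

theorem exists_drift_bound (hN : IsVectorNorm N) (hm : 0 < m)
    (hA : ∀ i j, MemLp (A · i j) (ENNReal.ofReal m) μ) (hb : MemLp b (ENNReal.ofReal m) μ)
    (hlt : contractionFactor N m A μ < 1) :
    ∃ r : ℝ, 0 < r ∧ r < 1 ∧ ∃ C : ℝ, ∀ x,
      ∫ ω, N (A ω *ᵥ x + b ω) ^ m ∂μ ≤ (1 - r) * N x ^ m + C := by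
  obtain ⟨t, hgt, ht₁⟩ := exists_between hlt
  obtain ⟨s, hts, hs₁⟩ := exists_between ht₁
  have ht₀ : 0 < t := hN.contractionFactor_nonneg.trans_lt hgt
  have hs₀ : 0 < s := ht₀.trans hts
  have hratio : (t / s) ^ m < 1 :=
    Real.rpow_lt_one (by positivity) ((div_lt_one hs₀).2 hts) hm
  refine ⟨1 - (t / s) ^ m, by linarith, sub_lt_self _ (by positivity),
    (∫ ω, N (b ω) ^ m ∂μ) / (1 - s) ^ m, fun x => ?_⟩
  have hx := hN.nonneg x
  have hfactor : (contractionFactor N m A μ * N x / s) ^ m ≤ (t / s) ^ m * N x ^ m := by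
    rw [← Real.mul_rpow (by positivity) hx, div_mul_eq_mul_div]
    have hfactor_nonneg := hN.contractionFactor_nonneg (m := m) (A := A) (μ := μ)
    gcongr
  linarith [hN.integral_rpow_mulVec_add_le hm hA hb hs₀ hs₁ x]

end Moments

end IsVectorNorm

lemma memLp_sq_of_integrable_abs_rpow {μ : Measure ℝ} {m : ℝ} (hm : 0 < m)
    (hmom : Integrable (fun e => |e| ^ (2 * m)) μ) :
    MemLp (fun e : ℝ => e ^ 2) (ENNReal.ofReal m) μ := by
  rw [← integrable_norm_rpow_iff (by fun_prop) (by simpa using hm) ENNReal.ofReal_ne_top]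
  simpa [ENNReal.toReal_ofReal hm.le, Real.rpow_mul] using hmom

lemma memLp_lambdaMat {μ : Measure ℝ} [IsFiniteMeasure μ] {p : ENNReal}
    (hsq : MemLp (fun e : ℝ => e ^ 2) p μ) (q : ℕ) (αc : ℕ → ℝ) (i j : Fin q) :
    MemLp (fun e => lambdaMat q αc e i j) p μ := by
  simp only [lambdaMat, Matrix.of_apply]
  split_ifs
  exacts [hsq.const_mul _, memLp_const 1, memLp_const 0]

lemma abs_lambdaZetaMat_le_lambdaMat {q : ℕ} {αc ζv : ℕ → ℝ}
    (hα : ∀ i, 1 ≤ i → i ≤ q → 0 ≤ αc i) (hζ : ∀ i, i ≤ q → |ζv i| ≤ 1) (e : ℝ) (i j : Fin q) :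
    |lambdaZetaMat q αc ζv e i j| ≤ lambdaMat q αc e i j := by
  have hαj : 0 ≤ αc (j + 1) := hα (j + 1) (by omega) (by omega)
  have hζj : |ζv (j + 1)| ≤ 1 := hζ (j + 1) (by omega)
  simp only [lambdaZetaMat, lambdaMat, Matrix.of_apply]
  split_ifs
  · rw [abs_mul, abs_mul, abs_of_nonneg hαj, abs_of_nonneg (sq_nonneg e)]
    exact mul_le_mul_of_nonneg_right (mul_le_of_le_one_right hαj hζj) (sq_nonneg e)
  · simp
  · simp

theorem stmt_13_general (q : ℕ) (m : ℝ) (hm : 0 < m)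
    (ω : ℝ) (αc : ℕ → ℝ) (hα : ∀ i, 1 ≤ i → i ≤ q → 0 ≤ αc i)
    (με : Measure ℝ) [IsFiniteMeasure με]
    (hmom : Integrable (fun e => |e| ^ (2 * m)) με)
    (N : (Fin q → ℝ) → ℝ) (hN : IsVectorNorm N) (hmono : IsMonotoneNorm N)
    (hlam : contractionFactor N m (lambdaMat q αc) με < 1) :
    ∃ lamt : ℝ, 0 < lamt ∧ lamt < 1 ∧ ∃ C : ℝ,
      ∀ ζv : ℕ → ℝ, (∀ i, i ≤ q → |ζv i| ≤ 1) → ∀ ξ : Fin q → ℝ,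
        (∫ e, N ((lambdaZetaMat q αc ζv e).mulVec ξ
            + fun i : Fin q => if (i : ℕ) = 0 then ζv 0 * ω * e ^ 2 else 0) ^ m ∂με)
          ≤ (1 - lamt) * N ξ ^ m + C := by
  have hsq := memLp_sq_of_integrable_abs_rpow hm hmom
  have hΛ := memLp_lambdaMat hsq q αc
  let b : ℝ → Fin q → ℝ := fun e i => if (i : ℕ) = 0 then |ω| * e ^ 2 else 0
  have hb : MemLp b (ENNReal.ofReal m) με := MemLp.of_eval fun i => by
    dsimp only [b]
    split_ifs
    exacts [hsq.const_mul _, memLp_const 0]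
  obtain ⟨r, hr₀, hr₁, C, hC⟩ := hN.exists_drift_bound hm hΛ hb hlam
  refine ⟨r, hr₀, hr₁, C, fun ζv hζ ξ => ?_⟩
  have hshift (e : ℝ) (i : Fin q) :
      |if (i : ℕ) = 0 then ζv 0 * ω * e ^ 2 else 0| ≤ b e i := by
    dsimp only [b]
    split_ifs
    · rw [abs_mul, abs_mul, abs_of_nonneg (sq_nonneg e)]
      exact mul_le_mul_of_nonneg_right
        (mul_le_of_le_one_left (abs_nonneg ω) (hζ 0 q.zero_le)) (sq_nonneg e)
    · simp
  calc _ ≤ ∫ e, N (lambdaMat q αc e *ᵥ |ξ| + b e) ^ m ∂με :=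
        integral_mono_of_nonneg (.of_forall fun e => Real.rpow_nonneg (hN.nonneg _) m)
          (hN.integrable_rpow_comp hm ((memLp_mulVec hΛ |ξ|).add hb))
          (.of_forall fun e => Real.rpow_le_rpow (hN.nonneg _)
            (hmono.mulVec_add_le (abs_lambdaZetaMat_le_lambdaMat hα hζ e) (hshift e) ξ) hm.le)
    _ ≤ (1 - r) * N ξ ^ m + C := hmono.apply_abs ξ ▸ hC |ξ|

/-- contraction drift bound for the ARCH component V₃.  If the monotone
norm ‖·‖_• satisfies λ = sup_{‖x‖_•=1}(E‖Λ_εx‖_•^m)^{1/m} < 1, then there are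
λ̃ ∈ (0,1) and C < ∞ such that for all ζ₀,…,ζ_q ∈ (0,1] and all entrywise nonnegative
ξ ∈ ℝ^q: E[‖Λ_{ζ,ε}ξ + ζ₀ωε²e₁‖_•^m] ≤ (1−λ̃)‖ξ‖_•^m + C. -/
theorem stmt_13 (q : ℕ) (hq : 1 ≤ q) (m : ℝ) (hm : 1 ≤ m)
    (ω : ℝ) (hω : 0 < ω) (αc : ℕ → ℝ) (hα : ∀ i, 1 ≤ i → i ≤ q → 0 ≤ αc i)
    (με : Measure ℝ) (hprob : IsProbabilityMeasure με)
    (hmom : Integrable (fun e => |e| ^ (2 * m)) με)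
    (N : (Fin q → ℝ) → ℝ) (hN : IsVectorNorm N) (hmono : IsMonotoneNorm N)
    (hlam : sSup {c : ℝ | ∃ x : Fin q → ℝ, N x = 1 ∧
      c = (∫ e, N ((lambdaMat q αc e).mulVec x) ^ m ∂με) ^ (1 / m)} < 1) :
    ∃ lamt : ℝ, 0 < lamt ∧ lamt < 1 ∧ ∃ C : ℝ,
      ∀ ζv : ℕ → ℝ, (∀ i, i ≤ q → 0 < ζv i ∧ ζv i ≤ 1) →
      ∀ ξ : Fin q → ℝ, (∀ j, 0 ≤ ξ j) →
        (∫ e, N ((lambdaZetaMat q αc ζv e).mulVec ξ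
            + fun i : Fin q => if (i : ℕ) = 0 then ζv 0 * ω * e ^ 2 else 0) ^ m ∂με)
          ≤ (1 - lamt) * N ξ ^ m + C :=
  stmt_13_general q m (by linarith) ω αc hα με hmom N hN hmono hlam |>.imp fun _ h =>
    ⟨h.1, h.2.1, h.2.2.imp fun _ hC ζv hζ ξ _ =>
      hC ζv (fun i hi => abs_le.2 ⟨by linarith [(hζ i hi).1], (hζ i hi).2⟩) ξ⟩
end

section
/- Let γ > 0, a₁ ≤ a₂, ν₁ < 0 < ν₂, and define g(u) = u + ν₁L(u;γ,a₁) + ν₂(1−L(u;γ,a₂)) where L(u;γ,a) = 1/(1+e^{−γ(u−a)}). Then g is continuous (hence measurable and locally bounded), |g(u)| → ∞ as |u| → ∞, and there exist positive constants r, M₀ and K₀ such that |g(u)| ≤ (1−r|u|^{−1})|u| for all |u| ≥ M₀ and |g(u)| ≤ K₀ for all |u| ≤ M₀. In other words, g satisfies Assumption 2(ii) with ρ = 1. -/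
open Filter

open scoped Topology

/-!
The drift `g u - u` tends to `ν₁ < 0` at `+∞` and to `ν₂ > 0` at `-∞`, so far from the origin `g`
has the sign of its argument and moves it towards `0` by more than a fixed `r < min (-ν₁) ν₂`:
`|g u| ≤ |u| - r = (1 - r |u|⁻¹) |u|`.
-/

section Drift

variable {α G : Type*} [AddCommGroup G] [LinearOrder G] [IsOrderedAddMonoid G]
  [TopologicalSpace G] [OrderTopology G] {l : Filter α} {f g : α → G} {c r : G}

theorem tendsto_atTop_of_tendsto_sub (hf : Tendsto f l atTop)
    (hfg : Tendsto (fun x => g x - f x) l (𝓝 c)) : Tendsto g l atTop := by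
  simpa only [add_sub_cancel] using hf.atTop_add hfg

theorem eventually_abs_le_abs_sub_of_tendsto_atTop (hf : Tendsto f l atTop)
    (hfg : Tendsto (fun x => g x - f x) l (𝓝 c)) (hr : c < -r) :
    ∀ᶠ x in l, |g x| ≤ |f x| - r := by
  filter_upwards [(tendsto_atTop_of_tendsto_sub hf hfg).eventually_ge_atTop 0,
    hfg.eventually_le_const hr] with x hg_nonneg hdrift
  calc |g x| = g x := abs_of_nonneg hg_nonneg
    _ ≤ f x - r := by simpa only [neg_add_eq_sub] using sub_le_iff_le_add.mp hdrift
    _ ≤ |f x| - r := sub_le_sub_right (le_abs_self _) r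

end Drift

section RealDrift

variable {g : ℝ → ℝ} {c₁ c₂ r : ℝ}

theorem tendsto_abs_cocompact_atTop_of_tendsto_sub_id
    (hbot : Tendsto (fun u => g u - u) atBot (𝓝 c₂))
    (htop : Tendsto (fun u => g u - u) atTop (𝓝 c₁)) :
    Tendsto (fun u => |g u|) (cocompact ℝ) atTop := by
  have hg_bot : Tendsto g atBot atBot := by
    simpa only [id, add_sub_cancel] using tendsto_id.atBot_add hbot
  have hg_top : Tendsto g atTop atTop := tendsto_atTop_of_tendsto_sub tendsto_id htop
  rw [cocompact_eq_atBot_atTop]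
  exact (tendsto_abs_atBot_atTop.comp hg_bot).sup (tendsto_abs_atTop_atTop.comp hg_top)

theorem eventually_cocompact_abs_le_abs_sub
    (hbot : Tendsto (fun u => g u - u) atBot (𝓝 c₂))
    (htop : Tendsto (fun u => g u - u) atTop (𝓝 c₁)) (hr₁ : c₁ < -r) (hr₂ : r < c₂) :
    ∀ᶠ u in cocompact ℝ, |g u| ≤ |u| - r := by
  rw [cocompact_eq_atBot_atTop, eventually_sup]
  refine ⟨?_, eventually_abs_le_abs_sub_of_tendsto_atTop tendsto_id htop hr₁⟩
  have hneg : Tendsto (fun u => -g u - -u) atBot (𝓝 (-c₂)) := by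
    simpa only [neg_sub_neg, neg_sub] using hbot.neg
  simpa only [abs_neg] using
    eventually_abs_le_abs_sub_of_tendsto_atTop tendsto_neg_atBot_atTop hneg (neg_lt_neg hr₂)

end RealDrift

theorem exists_pos_forall_le_norm_of_eventually_cocompact {E : Type*} [SeminormedAddGroup E]
    [ProperSpace E] {p : E → Prop} (hp : ∀ᶠ x in cocompact E, p x) :
    ∃ M > 0, ∀ x, M ≤ ‖x‖ → p x := by
  rw [← Metric.cobounded_eq_cocompact, hasBasis_cobounded_norm.eventually_iff] at hp
  obtain ⟨M, -, hM⟩ := hp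
  exact ⟨max M 1, by positivity, fun x hx => hM (le_of_max_le_left hx)⟩

theorem exists_pos_forall_norm_le_of_continuous {E F : Type*} [SeminormedAddGroup E]
    [ProperSpace E] [SeminormedAddGroup F] {f : E → F} (hf : Continuous f) (M : ℝ) :
    ∃ K > 0, ∀ x, ‖x‖ ≤ M → ‖f x‖ ≤ K := by
  obtain ⟨K, hK⟩ :=
    (isCompact_closedBall (0 : E) M).exists_bound_of_continuousOn hf.continuousOn
  exact ⟨max K 1, by positivity, fun x hx => le_max_of_le_left (hK x (by simpa using hx))⟩

theorem one_sub_mul_rpow_neg_one_mul (r : ℝ) {x : ℝ} (hx : x ≠ 0) :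
    (1 - r * x ^ (-1 : ℝ)) * x = x - r := by
  rw [Real.rpow_neg_one, sub_mul, one_mul, inv_mul_cancel_right₀ hx]

theorem exists_abs_le_one_sub_mul_rpow_mul_of_tendsto_sub_id {g : ℝ → ℝ} {c₁ c₂ : ℝ}
    (hg : Continuous g) (hbot : Tendsto (fun u => g u - u) atBot (𝓝 c₂))
    (htop : Tendsto (fun u => g u - u) atTop (𝓝 c₁)) (hc₁ : c₁ < 0) (hc₂ : 0 < c₂) :
    ∃ r M₀ K₀ : ℝ, 0 < r ∧ 0 < M₀ ∧ 0 < K₀ ∧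
      (∀ u : ℝ, M₀ ≤ |u| → |g u| ≤ (1 - r * |u| ^ (-(1 : ℝ))) * |u|) ∧
      (∀ u : ℝ, |u| ≤ M₀ → |g u| ≤ K₀) := by
  obtain ⟨r, hr, hr_lt⟩ := exists_between (lt_min (neg_pos.mpr hc₁) hc₂)
  obtain ⟨hr₁, hr₂⟩ := lt_min_iff.mp hr_lt
  obtain ⟨M₀, hM₀, hfar⟩ := exists_pos_forall_le_norm_of_eventually_cocompact
    (eventually_cocompact_abs_le_abs_sub hbot htop (lt_neg_of_lt_neg hr₁) hr₂)
  obtain ⟨K₀, hK₀, hnear⟩ := exists_pos_forall_norm_le_of_continuous hg M₀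
  refine ⟨r, M₀, K₀, hr, hM₀, hK₀, fun u hu => ?_, hnear⟩
  rw [one_sub_mul_rpow_neg_one_mul r (hM₀.trans_le hu).ne']
  exact hfar u hu

section Sigmoid

variable {γ : ℝ}

theorem tendsto_sigmoid_mul_sub_atTop (hγ : 0 < γ) (a : ℝ) :
    Tendsto (fun u => Real.sigmoid (γ * (u - a))) atTop (𝓝 1) :=
  Real.tendsto_sigmoid_atTop.comp <|
    (tendsto_atTop_add_const_right atTop (-a) tendsto_id).const_mul_atTop hγ

theorem tendsto_sigmoid_mul_sub_atBot (hγ : 0 < γ) (a : ℝ) :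
    Tendsto (fun u => Real.sigmoid (γ * (u - a))) atBot (𝓝 0) :=
  Real.tendsto_sigmoid_atBot.comp <|
    (tendsto_atBot_add_const_right atBot (-a) tendsto_id).const_mul_atBot hγ

end Sigmoid

theorem stmt_16_general (γ₁ γ₂ a₁ a₂ ν₁ ν₂ : ℝ) (hγ₁ : 0 < γ₁) (hγ₂ : 0 < γ₂)
    (hν₁ : ν₁ < 0) (hν₂ : 0 < ν₂) (g : ℝ → ℝ)
    (hg : ∀ u : ℝ, g u = u + ν₁ * Real.sigmoid (γ₁ * (u - a₁))
      + ν₂ * (1 - Real.sigmoid (γ₂ * (u - a₂)))) :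
    Continuous g ∧
    Tendsto (fun u : ℝ => |g u|) (cocompact ℝ) atTop ∧
    ∃ r M₀ K₀ : ℝ, 0 < r ∧ 0 < M₀ ∧ 0 < K₀ ∧
      (∀ u : ℝ, M₀ ≤ |u| → |g u| ≤ (1 - r * |u| ^ (-(1 : ℝ))) * |u|) ∧
      (∀ u : ℝ, |u| ≤ M₀ → |g u| ≤ K₀) := by
  have hcont : Continuous g := by
    rw [funext hg]
    fun_prop
  have hbot : Tendsto (fun u => g u - u) atBot (𝓝 ν₂) := by
    simpa [hg, add_assoc] using ((tendsto_sigmoid_mul_sub_atBot hγ₁ a₁).const_mul ν₁).add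
      (((tendsto_sigmoid_mul_sub_atBot hγ₂ a₂).const_sub 1).const_mul ν₂)
  have htop : Tendsto (fun u => g u - u) atTop (𝓝 ν₁) := by
    simpa [hg, add_assoc] using ((tendsto_sigmoid_mul_sub_atTop hγ₁ a₁).const_mul ν₁).add
      (((tendsto_sigmoid_mul_sub_atTop hγ₂ a₂).const_sub 1).const_mul ν₂)
  exact ⟨hcont, tendsto_abs_cocompact_atTop_of_tendsto_sub_id hbot htop,
    exists_abs_le_one_sub_mul_rpow_mul_of_tendsto_sub_id hcont hbot htop hν₁ hν₂⟩

/-- Let γ > 0, a₁ ≤ a₂, ν₁ < 0 < ν₂ and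
g(u) = u + ν₁L(u;γ,a₁) + ν₂(1−L(u;γ,a₂)) with L(u;γ,a) = 1/(1+e^{−γ(u−a)}).
Then g is continuous, |g(u)| → ∞ as |u| → ∞, and g satisfies the bounds of
Assumption 2(ii) with ρ = 1. -/
theorem stmt_16 (γ a₁ a₂ ν₁ ν₂ : ℝ) (hγ : 0 < γ) (ha : a₁ ≤ a₂)
    (hν₁ : ν₁ < 0) (hν₂ : 0 < ν₂)
    (g : ℝ → ℝ)
    (hg : ∀ u : ℝ, g u =
      u + ν₁ * (1 / (1 + Real.exp (-γ * (u - a₁))))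
        + ν₂ * (1 - 1 / (1 + Real.exp (-γ * (u - a₂))))) :
    Continuous g ∧
    Tendsto (fun u : ℝ => |g u|) (cocompact ℝ) atTop ∧
    ∃ r M₀ K₀ : ℝ, 0 < r ∧ 0 < M₀ ∧ 0 < K₀ ∧
      (∀ u : ℝ, M₀ ≤ |u| → |g u| ≤ (1 - r * |u| ^ (-(1 : ℝ))) * |u|) ∧
      (∀ u : ℝ, |u| ≤ M₀ → |g u| ≤ K₀) :=
  stmt_16_general γ γ a₁ a₂ ν₁ ν₂ hγ hγ hν₁ hν₂ g fun u => by
    simp only [hg, Real.sigmoid_def, one_div, neg_mul]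
end
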